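/- Let η^mono be the Euclidean projection of ℝ^N onto the monotone cone M_N = {x ∈ ℝ^N : x_t ≤ x_{t+1} for all 1 ≤ t ≤ N−1}, and let r(ℓ) = E ‖η^mono(W)‖₂² for W ∼ N(0, I_ℓ) be its risk at zero in dimension ℓ. Let F_{N,ε,mono} be the set of Borel probability measures ν on ℝ^N supported on M_N with E_ν[#{t ∈ {1,…,N−1} : X_t < X_{t+1}}] ≤ Nε, and set M(F_{N,ε,mono}) = (1/N) sup_{ν∈F_{N,ε,mono}} E_ν ‖X − η^mono(X+Z)‖₂² (X ∼ ν, Z ∼ N(0,I_N) independent). Then: (i) the limit M(ε|MonoReg) = lim_{N→∞} M(F_{N,ε,mono}) exists and equals max{ ε Σ_{ℓ≥1} π_ℓ r(ℓ) : (π_ℓ)_{ℓ≥1} a probability distribution on the positive integers with Σ_{ℓ≥1} ℓ π_ℓ = 1/ε }; equivalently, the curve (1/ε, M(ε|MonoReg)/ε) is the least concave envelope of the point set {(ℓ, r(ℓ)) : ℓ ∈ ℕ, ℓ ≥ 1}; (ii) there exists ε₀ > 0 such that for all ε ∈ (0, ε₀], M(ε|MonoReg) ≤ 20 ε (log(1/ε))².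 -/

import Mathlib

open MeasureTheory ProbabilityTheory ENNReal Filter

noncomputable section

/-- The standard Gaussian measure `N(0, I_N)` on `ℝ^N`. -/
def stdGaussian (N : ℕ) : Measure (Fin N → ℝ) :=
  Measure.pi fun _ => gaussianReal 0 1

/-- The cone `M_N` of nondecreasing sequences in `ℝ^N`. -/
def monoCone (N : ℕ) : Set (Fin N → ℝ) := {x | Monotone x}

/-- The number of increase points of `x : ℝ^N`, i.e. of adjacent pairs
`(i, i+1)` with `x i < x (i+1)`. -/
def incCount (N : ℕ) (x : Fin N → ℝ) : ℕ :=
  Nat.card {p : Fin N × Fin N // (p.1 : ℕ) + 1 = (p.2 : ℕ) ∧ x p.1 < x p.2}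

/-- The class `F_{N,ε,mono}` of probability measures supported on the monotone
cone with expected number of increase points at most `Nε`. -/
def monoClass (N : ℕ) (ε : ℝ) : Set (Measure (Fin N → ℝ)) :=
  {ν | IsProbabilityMeasure ν ∧ ν (monoCone N)ᶜ = 0 ∧
    (∫⁻ x, (incCount N x : ℝ≥0∞) ∂ν) ≤ (N : ℝ≥0∞) * ENNReal.ofReal ε}

section
variable (η : ∀ ℓ : ℕ, (Fin ℓ → ℝ) → (Fin ℓ → ℝ))

/-- The risk at zero of monotone regression in dimension `ℓ`,
`r(ℓ) = E ‖η^mono(W)‖₂²`, `W ∼ N(0, I_ℓ)`. -/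
def riskAtZero (ℓ : ℕ) : ℝ≥0∞ :=
  ∫⁻ w, ENNReal.ofReal (∑ i, (η ℓ w i) ^ 2) ∂(stdGaussian ℓ)

/-- The worst-case per-coordinate MSE of monotone regression over
`F_{N,ε,mono}`:
`M(F_{N,ε,mono}) = (1/N) sup_{ν} E ‖X − η^mono(X+Z)‖₂²`. -/
def monoMSE (N : ℕ) (ε : ℝ) : ℝ≥0∞ :=
  (N : ℝ≥0∞)⁻¹ *
    ⨆ ν ∈ monoClass N ε,
      ∫⁻ p, ENNReal.ofReal (∑ i, (p.1 i - η N (p.1 + p.2) i) ^ 2)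
        ∂(ν.prod (stdGaussian N))

/-- The variational value
`sup { ε Σ_ℓ π_ℓ r(ℓ) : π a probability distribution on {1,2,…} with
Σ_ℓ ℓ π_ℓ = 1/ε }`. -/
def monoMinimaxVal (ε : ℝ) : ℝ≥0∞ :=
  ⨆ (π : ℕ → ℝ≥0∞) (_ : π 0 = 0 ∧ (∑' ℓ, π ℓ) = 1 ∧
      (∑' ℓ : ℕ, (ℓ : ℝ≥0∞) * π ℓ) = ENNReal.ofReal (1 / ε)),
    ENNReal.ofReal ε * ∑' ℓ, π ℓ * riskAtZero η ℓ

end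

open scoped Matrix Asymptotics NNReal

/-!
Fix a signal `x ∈ M_N`. As `τ → ∞`, the risk of `η^mono` at `τ x` converges to the statistical
dimension (the expected squared norm of the projected Gaussian) of the tangent cone of `M_N` at
`x`, which also bounds the risk at `x` itself. This cone is the product of the monotone cones of
the constancy blocks of `x`, and `r(ℓ)` is the statistical dimension of the monotone cone in
dimension `ℓ`; hence the worst risk is governed by sums of `r` over block lengths.

An affine majorant `r(ℓ) ≤ a + b ℓ` summed over the at most `#increases + 1` blocks gives
`M(F_{N,ε,mono}) ≤ a ε + b + a / N`. Taking for it the edge above `1/ε` of the least concave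
majorant of `r`, which touches `r` at two points `p ≤ 1/ε < q`, the value `a ε + b` is attained
asymptotically by signals with blocks of lengths `p` and `q` only. The edge exists since
`r(ℓ) = O(log ℓ)`: an element of the monotone cone splits into a nonnegative and a nonpositive part,
and on the cone of nonnegative antitone sequences the energy is at most a weighted sum of squared
running maxima of the partial sums, which are controlled by Doob's `L²` inequality.
-/

/-- `f` sends each point to a point of `K` nearest in Euclidean distance. The distance is written
out in coordinates because `ι → ℝ` carries the sup norm. -/
def IsMetricProj {ι : Type*} [Fintype ι] (K : Set (ι → ℝ)) (f : (ι → ℝ) → ι → ℝ) : Prop :=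
  ∀ y, f y ∈ K ∧ ∀ x ∈ K, ∑ i, (y i - f y i) ^ 2 ≤ ∑ i, (y i - x i) ^ 2

/-- The cone of directions `v` for which `τ • x + v` is monotone once `τ` is large, that is, the
vectors increasing along each level set of the monotone vector `x`. -/
def monoTangentCone {ι : Type*} [Preorder ι] (x : ι → ℝ) : Set (ι → ℝ) :=
  {v | ∀ i j, i ≤ j → x i = x j → v i ≤ v j}

/-- The squared norm of the projection of `z` onto the cone `K`, through the dual formula
`‖Π_K z‖² = sup_{v ∈ K} (2 ⟨z, v⟩ - ‖v‖²)`, which does not mention the projection. -/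
def coneEnergy {ι : Type*} [Fintype ι] (K : Set (ι → ℝ)) (z : ι → ℝ) : ℝ≥0∞ :=
  ⨆ v ∈ K, ENNReal.ofReal (2 * (z ⬝ᵥ v) - v ⬝ᵥ v)

/-- The statistical dimension `E ‖Π_K Z‖²`, `Z ∼ N(0, I_n)`, of the cone `K`. -/
def statDim {n : ℕ} (K : Set (Fin n → ℝ)) : ℝ≥0∞ :=
  ∫⁻ z, coneEnergy K z ∂stdGaussian n

/-- The risk `E ‖x - f (x + Z)‖²`, `Z ∼ N(0, I_N)`, of the estimator `f` at the signal `x`. -/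
def riskAt {N : ℕ} (f : (Fin N → ℝ) → Fin N → ℝ) (x : Fin N → ℝ) : ℝ≥0∞ :=
  ∫⁻ z, ENNReal.ofReal (∑ i, (x i - f (x + z) i) ^ 2) ∂stdGaussian N

section Projection

variable {ι : Type*} [Fintype ι]

lemma dotProduct_self_eq_sum_sq (u : ι → ℝ) : u ⬝ᵥ u = ∑ i, u i ^ 2 := by
  simp only [dotProduct, sq]

lemma sum_sq_sub_eq_dotProduct (u v : ι → ℝ) : ∑ i, (u i - v i) ^ 2 = (u - v) ⬝ᵥ (u - v) :=
  (dotProduct_self_eq_sum_sq (u - v)).symm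

lemma dotProduct_self_nonneg (u : ι → ℝ) : 0 ≤ u ⬝ᵥ u := by
  rw [dotProduct_self_eq_sum_sq]; positivity

lemma abs_apply_le_sqrt_dotProduct_self (u : ι → ℝ) (i : ι) : |u i| ≤ √(u ⬝ᵥ u) := by
  rw [dotProduct_self_eq_sum_sq]
  exact Real.abs_le_sqrt
    (Finset.single_le_sum (f := fun i => u i ^ 2) (fun j _ => sq_nonneg _) (Finset.mem_univ i))

lemma two_mul_dotProduct_sub_le (z v : ι → ℝ) : 2 * (z ⬝ᵥ v) - v ⬝ᵥ v ≤ z ⬝ᵥ z := by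
  have h := dotProduct_self_nonneg (z - v)
  simp only [sub_dotProduct, dotProduct_sub, dotProduct_comm v z] at h
  linarith

variable {K : Set (ι → ℝ)} {f : (ι → ℝ) → ι → ℝ}

lemma IsMetricProj.sub_dotProduct_sub_nonpos (hf : IsMetricProj K f) (hK : Convex ℝ K)
    (y : ι → ℝ) {x : ι → ℝ} (hx : x ∈ K) : (y - f y) ⬝ᵥ (x - f y) ≤ 0 := by
  let K' : Set (EuclideanSpace ℝ ι) := (WithLp.linearEquiv 2 ℝ (ι → ℝ)).toLinearMap ⁻¹' K
  have hK' : Convex ℝ K' := hK.linear_preimage _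
  have hy : WithLp.toLp 2 (f y) ∈ K' := (hf y).1
  have hmin : ‖WithLp.toLp 2 y - WithLp.toLp 2 (f y)‖ = ⨅ w : K', ‖WithLp.toLp 2 y - w‖ := by
    have : Nonempty K' := ⟨_, hy⟩
    refine le_antisymm (le_ciInf fun w => ?_)
      (ciInf_le ⟨0, Set.forall_mem_range.2 fun w => norm_nonneg _⟩ (⟨_, hy⟩ : K'))
    simp only [EuclideanSpace.norm_eq, Real.norm_eq_abs, sq_abs]
    exact Real.sqrt_le_sqrt ((hf y).2 _ w.2)
  have h := (norm_eq_iInf_iff_real_inner_le_zero hK' hy).1 hmin (WithLp.toLp 2 x) hx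
  rwa [← WithLp.toLp_sub, ← WithLp.toLp_sub, EuclideanSpace.inner_toLp_toLp, star_trivial,
    dotProduct_comm] at h

lemma IsMetricProj.error_dotProduct_self_le (hf : IsMetricProj K f) (hK : Convex ℝ K)
    {x : ι → ℝ} (hx : x ∈ K) (z : ι → ℝ) :
    (f (x + z) - x) ⬝ᵥ (f (x + z) - x) ≤ z ⬝ᵥ (f (x + z) - x) := by
  have h := hf.sub_dotProduct_sub_nonpos hK (x + z) hx
  have hsplit : x + z - f (x + z) = z - (f (x + z) - x) := by abel
  rw [hsplit, ← neg_sub _ x, dotProduct_neg, sub_dotProduct] at h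
  linarith

lemma IsMetricProj.two_mul_dotProduct_sub_le_error (hf : IsMetricProj K f) (hK : Convex ℝ K)
    {x z v : ι → ℝ} (hv : x + v ∈ K) (hq : x + (2 : ℝ) • (f (x + z) - x) ∈ K) :
    2 * (z ⬝ᵥ v) - v ⬝ᵥ v ≤ ∑ i, (x i - f (x + z) i) ^ 2 := by
  have hmin := (hf (x + z)).2 _ hv
  have hvar := hf.sub_dotProduct_sub_nonpos hK (x + z) hq
  rw [sum_sq_sub_eq_dotProduct, sum_sq_sub_eq_dotProduct, add_sub_add_left_eq_sub] at hmin
  rw [sum_sq_sub_eq_dotProduct x]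
  generalize f (x + z) = p at hmin hvar ⊢
  obtain ⟨q, rfl⟩ : ∃ q, p = x + q := ⟨p - x, by abel⟩
  have hdouble : x + (2 : ℝ) • (x + q - x) - (x + q) = q := by module
  rw [hdouble] at hvar
  simp only [add_sub_add_left_eq_sub, sub_add_cancel_left, sub_dotProduct, dotProduct_sub,
    neg_dotProduct, dotProduct_neg, dotProduct_comm v z, dotProduct_comm q z] at hmin hvar ⊢
  linarith

end Projection

section TangentCone

variable {ι : Type*} [Preorder ι] {x : ι → ℝ}

lemma convex_setOf_monotone : Convex ℝ {x : ι → ℝ | Monotone x} := by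
  intro x hx y hy a b ha hb _
  exact (hx.const_mul ha).add (hy.const_mul hb)

lemma monoTangentCone_const (c : ℝ) :
    monoTangentCone (fun _ : ι => c) = {v | Monotone v} := by
  ext v
  simp only [monoTangentCone, Set.mem_ofPred_eq, forall_const, Monotone]

lemma sub_mem_monoTangentCone {y : ι → ℝ} (hy : Monotone y) :
    y - x ∈ monoTangentCone x := fun i j hij hx => by
  simpa only [Pi.sub_apply, hx] using sub_le_sub_right (hy hij) (x j)

lemma eventually_monotone_smul_add [Finite ι] (hx : Monotone x) (R : ℝ) :
    ∀ᶠ τ : ℝ in atTop, ∀ v ∈ monoTangentCone x, (∀ i, |v i| ≤ R) → Monotone (τ • x + v) := by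
  have hgap : ∀ᶠ τ : ℝ in atTop, ∀ i j, x i < x j → 2 * R ≤ τ * (x j - x i) := by
    refine eventually_all.2 fun i => eventually_all.2 fun j => ?_
    by_cases hij : x i < x j
    · filter_upwards [(tendsto_id.atTop_mul_const (sub_pos.2 hij)).eventually_ge_atTop (2 * R)]
        with τ hτ _ using hτ
    · exact .of_forall fun _ h => absurd h hij
  filter_upwards [hgap] with τ hτ v hv hR i j hij
  simp only [Pi.add_apply, Pi.smul_apply, smul_eq_mul]
  rcases (hx hij).eq_or_lt with heq | hlt
  · rw [heq]
    gcongr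
    exact hv i j hij heq
  · linarith [hτ i j hlt, abs_le.1 (hR i), abs_le.1 (hR j)]

end TangentCone

section RiskBounds

variable {N : ℕ} {f : (Fin N → ℝ) → Fin N → ℝ} {x : Fin N → ℝ}

lemma riskAt_le_statDim_monoTangentCone (hf : IsMetricProj (monoCone N) f) (hx : Monotone x) :
    riskAt f x ≤ statDim (monoTangentCone x) := by
  refine lintegral_mono fun z => ?_
  have hmem : f (x + z) - x ∈ monoTangentCone x := sub_mem_monoTangentCone (hf (x + z)).1
  have hle := hf.error_dotProduct_self_le convex_setOf_monotone hx z
  refine le_iSup₂_of_le _ hmem (ENNReal.ofReal_le_ofReal ?_)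
  rw [sum_sq_sub_eq_dotProduct, ← neg_sub _ x, neg_dotProduct_neg]
  linarith

lemma eventually_le_error (hf : IsMetricProj (monoCone N) f) (hx : Monotone x) (z : Fin N → ℝ)
    {v : Fin N → ℝ} (hv : v ∈ monoTangentCone x) :
    ∀ᶠ τ : ℝ in atTop,
      2 * (z ⬝ᵥ v) - v ⬝ᵥ v ≤ ∑ i, ((τ • x) i - f (τ • x + z) i) ^ 2 := by
  filter_upwards [eventually_monotone_smul_add hx √(v ⬝ᵥ v),
    eventually_monotone_smul_add hx (2 * √(z ⬝ᵥ z)), eventually_gt_atTop 0] with τ hτv hτz hτ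
  have hτx : Monotone (τ • x) := hx.const_mul hτ.le
  set q := f (τ • x + z) - τ • x with hq
  have hq_mem : (2 : ℝ) • q ∈ monoTangentCone x := fun i j hij hxij => by
    have := (hf (τ • x + z)).1 hij
    simp only [hq, Pi.smul_apply, Pi.sub_apply, smul_eq_mul, hxij]
    linarith
  have hq_norm : q ⬝ᵥ q ≤ z ⬝ᵥ z := by
    linarith [hf.error_dotProduct_self_le convex_setOf_monotone hτx z,
      two_mul_dotProduct_sub_le z q]
  have hq_abs (i : Fin N) : |((2 : ℝ) • q) i| ≤ 2 * √(z ⬝ᵥ z) := by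
    rw [Pi.smul_apply, smul_eq_mul, abs_mul, abs_two]
    gcongr
    exact (abs_apply_le_sqrt_dotProduct_self q i).trans (Real.sqrt_le_sqrt hq_norm)
  exact hf.two_mul_dotProduct_sub_le_error convex_setOf_monotone
    (hτv v hv (abs_apply_le_sqrt_dotProduct_self v)) (hτz _ hq_mem hq_abs)

lemma statDim_monoTangentCone_le (hf : IsMetricProj (monoCone N) f) (hmeas : Measurable f)
    (hx : Monotone x) {c : ℝ≥0∞} (h : ∀ τ : ℝ, 0 ≤ τ → riskAt f (τ • x) ≤ c) :
    statDim (monoTangentCone x) ≤ c :=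
  calc statDim (monoTangentCone x)
      ≤ ∫⁻ z, liminf (fun τ : ℝ =>
          ENNReal.ofReal (∑ i, ((τ • x) i - f (τ • x + z) i) ^ 2)) atTop ∂stdGaussian N := by
        refine lintegral_mono fun z => iSup₂_le fun v hv => le_liminf_of_le (by isBoundedDefault) ?_
        filter_upwards [eventually_le_error hf hx z hv] with τ hτ
        exact ENNReal.ofReal_le_ofReal hτ
    _ ≤ liminf (fun τ : ℝ => riskAt f (τ • x)) atTop :=
        lintegral_liminf_le fun τ => by fun_prop
    _ ≤ c := liminf_le_of_le (by isBoundedDefault) fun b hb => by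
        obtain ⟨τ, hbτ, hτ⟩ := (hb.and (eventually_ge_atTop 0)).exists
        exact hbτ.trans (h τ hτ)

lemma riskAtZero_eq_statDim {η : ∀ ℓ : ℕ, (Fin ℓ → ℝ) → Fin ℓ → ℝ} {n : ℕ}
    (hη : IsMetricProj (monoCone n) (η n)) (hmeas : Measurable (η n)) :
    riskAtZero η n = statDim (monoCone n) := by
  have hrisk : riskAtZero η n = riskAt (η n) 0 := by
    simp only [riskAtZero, riskAt, Pi.zero_apply, zero_sub, neg_sq, zero_add]
  have hcone : monoTangentCone (0 : Fin n → ℝ) = monoCone n := monoTangentCone_const 0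
  have hmono : Monotone (0 : Fin n → ℝ) := monotone_const
  rw [hrisk, ← hcone]
  refine le_antisymm (riskAt_le_statDim_monoTangentCone hη hmono)
    (statDim_monoTangentCone_le hη hmeas hmono fun τ _ => ?_)
  rw [smul_zero]

end RiskBounds

section GaussianInvariance

variable {m n : ℕ}

instance : IsProbabilityMeasure (stdGaussian n) := by
  unfold _root_.stdGaussian; infer_instance

lemma charFun_map_toLp (μ : Measure (Fin n → ℝ)) (t : EuclideanSpace ℝ (Fin n)) :
    charFun (μ.map (WithLp.toLp 2)) t = ∫ z, Complex.exp ((z ⬝ᵥ t.ofLp : ℝ) * Complex.I) ∂μ := by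
  rw [charFun_apply, integral_map (by fun_prop) (by fun_prop)]
  refine integral_congr_ae (.of_forall fun z => ?_)
  simp only [EuclideanSpace.inner_eq_star_dotProduct, star_trivial, dotProduct_comm]

lemma integral_cexp_dotProduct_stdGaussian (t : Fin n → ℝ) :
    ∫ z, Complex.exp ((z ⬝ᵥ t : ℝ) * Complex.I) ∂stdGaussian n =
      Complex.exp (-(t ⬝ᵥ t : ℝ) / 2) := by
  rw [← charFun_map_toLp _ (WithLp.toLp 2 t), _root_.stdGaussian, charFun_pi]
  simp only [charFun_gaussianReal, ← Complex.exp_sum, dotProduct_self_eq_sum_sq]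
  simp [Finset.sum_div, neg_div]

lemma hasLaw_stdGaussian_of_adjoint_isometry {L : (Fin n → ℝ) → Fin m → ℝ}
    {T : (Fin m → ℝ) → Fin n → ℝ} (hadj : ∀ z v, L z ⬝ᵥ v = z ⬝ᵥ T v)
    (hT : ∀ v, T v ⬝ᵥ T v = v ⬝ᵥ v) :
    HasLaw L (stdGaussian m) (stdGaussian n) := by
  have hL : Measurable L := by
    refine measurable_pi_lambda L fun i => ?_
    have hLi (z : Fin n → ℝ) : L z i = ∑ j, z j * T (Pi.single i 1) j := by
      rw [← mul_one (L z i), ← dotProduct_single, hadj, dotProduct]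
    simp only [hLi]
    fun_prop
  have := Measure.isProbabilityMeasure_map (μ := stdGaussian n) hL.aemeasurable
  refine ⟨hL.aemeasurable, charFun_eq_pi_iff.1 fun t => ?_⟩
  rw [← charFun_pi, charFun_map_toLp, integral_map hL.aemeasurable (by fun_prop)]
  simp only [hadj]
  rw [integral_cexp_dotProduct_stdGaussian, hT, ← integral_cexp_dotProduct_stdGaussian,
    ← charFun_map_toLp, _root_.stdGaussian]

end GaussianInvariance

section StatDim

variable {m n : ℕ}

lemma coneEnergy_mono {ι : Type*} [Fintype ι] {K K' : Set (ι → ℝ)} (h : K ⊆ K') (z : ι → ℝ) :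
    coneEnergy K z ≤ coneEnergy K' z :=
  biSup_mono fun _ hv => h hv

lemma statDim_mono {K K' : Set (Fin n → ℝ)} (h : K ⊆ K') : statDim K ≤ statDim K' :=
  lintegral_mono fun z => coneEnergy_mono h z

lemma measurable_coneEnergy {ι : Type*} [Fintype ι] (K : Set (ι → ℝ)) :
    Measurable (coneEnergy K) := by
  refine (lowerSemicontinuous_biSup fun v _ => ?_).measurable
  exact (ENNReal.continuous_ofReal.comp (by unfold dotProduct; fun_prop)).lowerSemicontinuous

lemma lintegral_coneEnergy_of_hasLaw {Ω : Type*} {_ : MeasurableSpace Ω} {P : Measure Ω}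
    {X : Ω → Fin n → ℝ} (hX : HasLaw X (stdGaussian n) P) (K : Set (Fin n → ℝ)) :
    ∫⁻ ω, coneEnergy K (X ω) ∂P = statDim K :=
  hX.lintegral_comp (measurable_coneEnergy K).aemeasurable

lemma statDim_le_of_isometry {K : Set (Fin m → ℝ)} {K' : Set (Fin n → ℝ)}
    {L : (Fin n → ℝ) → Fin m → ℝ} {T : (Fin m → ℝ) → Fin n → ℝ}
    (hadj : ∀ z v, L z ⬝ᵥ v = z ⬝ᵥ T v) (hT : ∀ v, T v ⬝ᵥ T v = v ⬝ᵥ v)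
    (hK : ∀ v ∈ K, T v ∈ K') : statDim K ≤ statDim K' := by
  rw [← lintegral_coneEnergy_of_hasLaw (hasLaw_stdGaussian_of_adjoint_isometry hadj hT) K]
  refine lintegral_mono fun z => iSup₂_le fun v hv => ?_
  rw [hadj, ← hT]
  exact le_iSup₂_of_le (T v) (hK v hv) le_rfl

lemma coneEnergy_univ {ι : Type*} [Fintype ι] (z : ι → ℝ) :
    coneEnergy Set.univ z = ENNReal.ofReal (z ⬝ᵥ z) := by
  refine le_antisymm
    (iSup₂_le fun v _ => ENNReal.ofReal_le_ofReal (two_mul_dotProduct_sub_le z v))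
    (le_iSup₂_of_le z (Set.mem_univ z) ?_)
  rw [two_mul, add_sub_cancel_right]

lemma lintegral_sq_gaussianReal : ∫⁻ x, ENNReal.ofReal (x ^ 2) ∂gaussianReal 0 1 = 1 := by
  have hvar : ∫ x, x ^ 2 ∂gaussianReal 0 1 = 1 := by
    simpa [variance_of_integral_eq_zero aemeasurable_id] using
      variance_id_gaussianReal (μ := 0) (v := 1)
  have hintegrable : Integrable (fun x : ℝ => x ^ 2) (gaussianReal 0 1) :=
    (memLp_id_gaussianReal 2).integrable_sq
  rw [← ofReal_integral_eq_lintegral_ofReal hintegrable (.of_forall fun x => sq_nonneg x), hvar,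
    ENNReal.ofReal_one]

lemma statDim_univ : statDim (Set.univ : Set (Fin n → ℝ)) = n := by
  have hcoord (i : Fin n) : ∫⁻ z, ENNReal.ofReal (z i ^ 2) ∂stdGaussian n = 1 :=
    ((measurePreserving_eval (fun _ => gaussianReal 0 1) i).lintegral_comp
      (by fun_prop)).trans lintegral_sq_gaussianReal
  simp only [statDim, coneEnergy_univ, dotProduct_self_eq_sum_sq,
    ENNReal.ofReal_sum_of_nonneg fun _ _ => sq_nonneg _]
  rw [lintegral_finsetSum _ fun i _ => by fun_prop]
  simp only [hcoord, Finset.sum_const, Finset.card_univ, Fintype.card_fin, nsmul_eq_mul, mul_one]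

lemma statDim_le (K : Set (Fin n → ℝ)) : statDim K ≤ n :=
  statDim_univ (n := n) ▸ statDim_mono K.subset_univ

lemma dotProduct_fin_add (z w : Fin (m + n) → ℝ) :
    z ⬝ᵥ w = (fun i => z (Fin.castAdd n i)) ⬝ᵥ (fun i => w (Fin.castAdd n i)) +
      (fun j => z (Fin.natAdd m j)) ⬝ᵥ (fun j => w (Fin.natAdd m j)) :=
  Fin.sum_univ_add _

lemma hasLaw_castAdd_stdGaussian :
    HasLaw (fun (z : Fin (m + n) → ℝ) i => z (Fin.castAdd n i)) (stdGaussian m)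
      (stdGaussian (m + n)) := by
  refine hasLaw_stdGaussian_of_adjoint_isometry (T := fun v => Fin.append v 0)
    (fun z v => ?_) (fun v => ?_) <;>
  simp only [dotProduct, Fin.sum_univ_add, Fin.append_left, Fin.append_right, Pi.zero_apply,
    mul_zero, Finset.sum_const_zero, add_zero]

lemma hasLaw_natAdd_stdGaussian :
    HasLaw (fun (z : Fin (m + n) → ℝ) j => z (Fin.natAdd m j)) (stdGaussian n)
      (stdGaussian (m + n)) := by
  refine hasLaw_stdGaussian_of_adjoint_isometry (T := fun v => Fin.append 0 v)
    (fun z v => ?_) (fun v => ?_) <;>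
  simp only [dotProduct, Fin.sum_univ_add, Fin.append_left, Fin.append_right, Pi.zero_apply,
    mul_zero, Finset.sum_const_zero, zero_add]

lemma statDim_add_statDim (K₁ : Set (Fin m → ℝ)) (K₂ : Set (Fin n → ℝ)) :
    statDim K₁ + statDim K₂ =
      ∫⁻ z, (coneEnergy K₁ (fun i => z (Fin.castAdd n i)) +
        coneEnergy K₂ (fun j => z (Fin.natAdd m j))) ∂stdGaussian (m + n) := by
  have hmeas : Measurable fun z : Fin (m + n) → ℝ => coneEnergy K₁ fun i => z (Fin.castAdd n i) :=
    (measurable_coneEnergy K₁).comp (by fun_prop)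
  rw [lintegral_add_left hmeas,
    lintegral_coneEnergy_of_hasLaw hasLaw_castAdd_stdGaussian,
    lintegral_coneEnergy_of_hasLaw hasLaw_natAdd_stdGaussian]

variable {K : Set (Fin (m + n) → ℝ)} {K₁ : Set (Fin m → ℝ)} {K₂ : Set (Fin n → ℝ)}

lemma statDim_le_add (h₁ : ∀ v ∈ K, (fun i => v (Fin.castAdd n i)) ∈ K₁)
    (h₂ : ∀ v ∈ K, (fun j => v (Fin.natAdd m j)) ∈ K₂) :
    statDim K ≤ statDim K₁ + statDim K₂ := by
  rw [statDim_add_statDim]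
  refine lintegral_mono fun z => iSup₂_le fun v hv => ?_
  rw [dotProduct_fin_add, dotProduct_fin_add, mul_add, add_sub_add_comm]
  exact ENNReal.ofReal_add_le.trans
    (add_le_add (le_iSup₂_of_le _ (h₁ v hv) le_rfl) (le_iSup₂_of_le _ (h₂ v hv) le_rfl))

lemma exists_mem_nonneg_and_ofReal_le {ι : Type*} [Fintype ι] {K : Set (ι → ℝ)} (h0 : 0 ∈ K)
    (z : ι → ℝ) {u : ι → ℝ} (hu : u ∈ K) :
    ∃ v ∈ K, 0 ≤ 2 * (z ⬝ᵥ v) - v ⬝ᵥ v ∧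
      ENNReal.ofReal (2 * (z ⬝ᵥ u) - u ⬝ᵥ u) ≤ ENNReal.ofReal (2 * (z ⬝ᵥ v) - v ⬝ᵥ v) := by
  rcases le_total 0 (2 * (z ⬝ᵥ u) - u ⬝ᵥ u) with h | h
  · exact ⟨u, hu, h, le_rfl⟩
  · exact ⟨0, h0, by simp, by simp [ENNReal.ofReal_of_nonpos h]⟩

lemma statDim_add_le (h₁ : 0 ∈ K₁) (h₂ : 0 ∈ K₂)
    (h : ∀ u ∈ K₁, ∀ v ∈ K₂, Fin.append u v ∈ K) :
    statDim K₁ + statDim K₂ ≤ statDim K := by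
  rw [statDim_add_statDim]
  refine lintegral_mono fun z => ENNReal.biSup_add_biSup_le ⟨0, h₁⟩ ⟨0, h₂⟩ fun u hu v hv => ?_
  obtain ⟨u', hu', hu0, hle₁⟩ := exists_mem_nonneg_and_ofReal_le h₁ _ hu
  obtain ⟨v', hv', hv0, hle₂⟩ := exists_mem_nonneg_and_ofReal_le h₂ _ hv
  refine (add_le_add hle₁ hle₂).trans (le_iSup₂_of_le _ (h u' hu' v' hv') ?_)
  rw [← ENNReal.ofReal_add hu0 hv0, dotProduct_fin_add, dotProduct_fin_add]
  simp only [Fin.append_left, Fin.append_right]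
  exact ENNReal.ofReal_le_ofReal (by linarith)

end StatDim

section MonoCone

variable {n : ℕ}

lemma statDim_monoCone_one : statDim (monoCone 1) = 1 := by
  have huniv : monoCone 1 = Set.univ := Set.eq_univ_of_forall fun _ => Subsingleton.monotone _
  rw [huniv, statDim_univ, Nat.cast_one]

/-- Repeating each entry `k` times embeds `monoCone n` into `monoCone (n * k)`. -/
lemma statDim_monoCone_le_mul {k : ℕ} (hk : k ≠ 0) :
    statDim (monoCone n) ≤ statDim (monoCone (n * k)) := by
  have hdiv (i : Fin n) (j : Fin k) : (finProdFinEquiv (i, j)).divNat = i :=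
    congrArg Prod.fst (finProdFinEquiv.symm_apply_apply (i, j))
  refine statDim_le_of_isometry
    (L := fun z i => (√k)⁻¹ * ∑ j : Fin k, z (finProdFinEquiv (i, j)))
    (T := fun v j => (√k)⁻¹ * v j.divNat) (fun z v => ?_) (fun v => ?_) fun v hv i j hij => ?_
  · simp only [dotProduct, ← finProdFinEquiv.sum_comp, Fintype.sum_prod_type, hdiv, Finset.mul_sum,
      Finset.sum_mul]
    exact Finset.sum_congr rfl fun i _ => Finset.sum_congr rfl fun j _ => by ring
  · simp only [dotProduct, ← finProdFinEquiv.sum_comp, Fintype.sum_prod_type, hdiv,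
      Finset.sum_const, Finset.card_univ, Fintype.card_fin, nsmul_eq_mul]
    refine Finset.sum_congr rfl fun i _ => ?_
    rw [mul_mul_mul_comm, ← mul_inv, Real.mul_self_sqrt k.cast_nonneg,
      mul_inv_cancel_left₀ (Nat.cast_ne_zero.2 hk)]
  · have : i.divNat ≤ j.divNat := Nat.div_le_div_right hij
    exact mul_le_mul_of_nonneg_left (hv this) (by positivity)

end MonoCone

section MaximalInequality

/-- The pathwise form of Doob's `L²` inequality: along a centred random walk `s`, the sum on the
right has mean zero. -/
lemma sq_partialSups_le (s : ℕ → ℝ) (n : ℕ) :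
    partialSups s n ^ 2
      ≤ 4 * s n ^ 2 - 4 * ∑ k ∈ Finset.range n, partialSups s k * (s (k + 1) - s k) := by
  have h : partialSups s n ^ 2 / 2 + ∑ k ∈ Finset.range n, partialSups s k * (s (k + 1) - s k)
      ≤ partialSups s n * s n := by
    induction n with
    | zero => simp only [partialSups_zero, Finset.range_zero, Finset.sum_empty]; nlinarith
    | succ n ih =>
      rw [Finset.sum_range_succ, partialSups_add_one]
      rcases le_total (s (n + 1)) (partialSups s n) with hle | hle
      · rw [sup_eq_left.2 hle]; linarith
      · rw [sup_eq_right.2 hle]; nlinarith [sq_nonneg (s (n + 1) - partialSups s n)]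
  nlinarith [sq_nonneg (partialSups s n - 2 * s n)]

variable {Ω : Type*} {mΩ : MeasurableSpace Ω} {P : Measure Ω} {f : ℕ → Ω → ℝ}

lemma measurable_partialSups_apply (hf : ∀ n, Measurable (f n)) (n : ℕ) :
    Measurable fun ω => partialSups (f · ω) n := by
  simp only [partialSups_eq_sup'_range]
  exact Finset.measurable_range_sup'' fun k _ => hf k

lemma memLp_partialSups_apply {p : ℝ≥0∞} (hf : ∀ n, MemLp (f n) p P) (n : ℕ) :
    MemLp (fun ω => partialSups (f · ω) n) p P := by
  induction n with
  | zero => simpa only [partialSups_zero] using hf 0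
  | succ n ih => simp only [partialSups_add_one]; exact ih.sup (hf (n + 1))

lemma indepFun_partialSups_sum [IsZeroOrProbabilityMeasure P] (hf : ∀ n, Measurable (f n))
    (hind : iIndepFun f P) (k : ℕ) :
    IndepFun (fun ω => partialSups (fun j => ∑ i ∈ Finset.range j, f i ω) k) (f k) P := by
  let g : (Finset.range k → ℝ) → ℝ := fun y =>
    partialSups (fun j => ∑ i : Finset.range k, if (i : ℕ) < j then y i else 0) k
  have hg : Measurable g := by
    refine measurable_partialSups_apply (fun j => Finset.measurable_sum _ fun i _ => ?_) k
    by_cases hij : (i : ℕ) < j <;> simp only [hij, if_true, if_false] <;> fun_prop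
  have hpast : (fun ω => partialSups (fun j => ∑ i ∈ Finset.range j, f i ω) k)
      = g ∘ fun ω (i : Finset.range k) => f i ω := by
    ext ω
    simp only [g, Function.comp_apply, partialSups_apply]
    refine Finset.sup'_congr _ rfl fun j hj => ?_
    rw [Finset.sum_coe_sort (Finset.range k) fun i => if i < j then f i ω else 0,
      ← Finset.sum_filter]
    refine Finset.sum_congr ?_ fun _ _ => rfl
    ext i
    simp only [Finset.mem_filter, Finset.mem_range, Finset.mem_Iic] at hj ⊢
    omega
  rw [hpast]
  have hdisj : Disjoint (Finset.range k) {k} := by simp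
  exact (hind.indepFun_finset _ _ hdisj hf).comp hg
    (measurable_pi_apply (⟨k, Finset.mem_singleton_self k⟩ : ({k} : Finset ℕ)))

lemma integral_sq_partialSups_sum_le [IsProbabilityMeasure P] (hf : ∀ n, Measurable (f n))
    (hLp : ∀ n, MemLp (f n) 2 P) (hmean : ∀ n, ∫ ω, f n ω ∂P = 0) (hind : iIndepFun f P) (n : ℕ) :
    ∫ ω, partialSups (fun j => ∑ i ∈ Finset.range j, f i ω) n ^ 2 ∂P
      ≤ 4 * ∑ i ∈ Finset.range n, Var[f i; P] := by
  let S (j : ℕ) (ω : Ω) : ℝ := ∑ i ∈ Finset.range j, f i ω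
  let M (j : ℕ) (ω : Ω) : ℝ := partialSups (S · ω) j
  have hSLp (j) : MemLp (S j) 2 P := memLp_finsetSum _ fun i _ => hLp i
  have hMLp (j) : MemLp (M j) 2 P := memLp_partialSups_apply hSLp j
  have hintegrable (k) : Integrable (fun ω => M k ω * f k ω) P := (hMLp k).integrable_mul (hLp k)
  have horth (k) : ∫ ω, M k ω * f k ω ∂P = 0 := by
    rw [(indepFun_partialSups_sum hf hind k).integral_fun_mul_eq_mul_integral
      (hMLp k).aestronglyMeasurable (hLp k).aestronglyMeasurable, hmean, mul_zero]
  have hvar : ∫ ω, S n ω ^ 2 ∂P = ∑ i ∈ Finset.range n, Var[f i; P] := by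
    have hzero : ∫ ω, S n ω ∂P = 0 := by
      rw [integral_finsetSum _ fun i _ => (hLp i).integrable one_le_two]
      exact Finset.sum_eq_zero fun i _ => hmean i
    rw [← variance_of_integral_eq_zero (hSLp n).aemeasurable hzero,
      ← IndepFun.variance_sum (fun i _ => hLp i) fun i _ j _ hij => hind.indepFun hij]
    congr 1
    ext ω
    exact (Finset.sum_apply ω _ f).symm
  calc ∫ ω, M n ω ^ 2 ∂P
      ≤ ∫ ω, (4 * S n ω ^ 2 - 4 * ∑ k ∈ Finset.range n, M k ω * f k ω) ∂P := by
        refine integral_mono (hMLp n).integrable_sq (((hSLp n).integrable_sq.const_mul 4).sub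
          ((integrable_finsetSum _ fun k _ => hintegrable k).const_mul 4)) fun ω => ?_
        have h := sq_partialSups_le (S · ω) n
        simpa only [S, Finset.sum_range_succ, add_sub_cancel_left] using h
    _ = 4 * ∑ i ∈ Finset.range n, Var[f i; P] := by
        rw [integral_sub ((hSLp n).integrable_sq.const_mul 4)
          ((integrable_finsetSum _ fun k _ => hintegrable k).const_mul 4), integral_const_mul,
          integral_const_mul, integral_finsetSum _ fun k _ => hintegrable k, hvar,
          Finset.sum_eq_zero fun k _ => horth k, mul_zero, sub_zero]

end MaximalInequality

/-- The cone of nonincreasing nonnegative vectors, the common shape of the negative part of a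
monotone vector and of the reversal of its positive part. -/
def antitoneNonnegCone (n : ℕ) : Set (Fin n → ℝ) :=
  {u | Antitone u ∧ 0 ≤ u}

section LogBound

variable {n : ℕ}

lemma coneEnergy_monoCone_le (z : Fin n → ℝ) :
    coneEnergy (monoCone n) z
      ≤ coneEnergy (antitoneNonnegCone n) (z ∘ Fin.rev)
        + coneEnergy (antitoneNonnegCone n) (-z) := by
  refine iSup₂_le fun v hv => ?_
  have hpos : v⁺ ∘ Fin.rev ∈ antitoneNonnegCone n :=
    ⟨fun i j hij => posPart_mono (hv (Fin.rev_le_rev.2 hij)), fun i => posPart_nonneg (v i.rev)⟩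
  have hneg : v⁻ ∈ antitoneNonnegCone n :=
    ⟨fun i j hij => negPart_anti (hv hij), negPart_nonneg v⟩
  have hrev (a b : Fin n → ℝ) : (a ∘ Fin.rev) ⬝ᵥ (b ∘ Fin.rev) = a ⬝ᵥ b :=
    Equiv.sum_comp Fin.revPerm fun i => a i * b i
  have horth : v⁺ ⬝ᵥ v⁻ = 0 := Finset.sum_eq_zero fun i _ => by
    rcases le_total 0 (v i) with h | h <;> simp [h]
  have hsplit : 2 * (z ⬝ᵥ v) - v ⬝ᵥ v
      = (2 * ((z ∘ Fin.rev) ⬝ᵥ (v⁺ ∘ Fin.rev)) - (v⁺ ∘ Fin.rev) ⬝ᵥ (v⁺ ∘ Fin.rev))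
        + (2 * (-z ⬝ᵥ v⁻) - v⁻ ⬝ᵥ v⁻) := by
    rw [hrev, hrev]
    conv_lhs => rw [← posPart_sub_negPart v]
    simp only [dotProduct_sub, sub_dotProduct, neg_dotProduct, dotProduct_comm v⁻ v⁺, horth]
    ring
  rw [hsplit]
  exact ENNReal.ofReal_add_le.trans
    (add_le_add (le_iSup₂_of_le _ hpos le_rfl) (le_iSup₂_of_le _ hneg le_rfl))

lemma hasLaw_comp_rev_stdGaussian :
    HasLaw (fun z : Fin n → ℝ => z ∘ Fin.rev) (stdGaussian n) (stdGaussian n) :=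
  hasLaw_stdGaussian_of_adjoint_isometry (T := fun v => v ∘ Fin.rev)
    (fun z v => by
      simpa only [Fin.revPerm_apply, Fin.rev_rev] using!
        Equiv.sum_comp Fin.revPerm fun i => z i * v i.rev)
    fun v => Equiv.sum_comp Fin.revPerm fun i => v i * v i

lemma hasLaw_neg_stdGaussian :
    HasLaw (fun z : Fin n → ℝ => -z) (stdGaussian n) (stdGaussian n) :=
  hasLaw_stdGaussian_of_adjoint_isometry (T := fun v => -v)
    (fun z v => by rw [neg_dotProduct, dotProduct_neg])
    fun v => neg_dotProduct_neg v v

lemma statDim_monoCone_le_two_mul :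
    statDim (monoCone n) ≤ 2 * statDim (antitoneNonnegCone n) := by
  calc statDim (monoCone n)
      ≤ ∫⁻ z, (coneEnergy (antitoneNonnegCone n) (z ∘ Fin.rev)
          + coneEnergy (antitoneNonnegCone n) (-z)) ∂stdGaussian n :=
        lintegral_mono coneEnergy_monoCone_le
    _ = 2 * statDim (antitoneNonnegCone n) := by
        have hmeas : Measurable fun z : Fin n → ℝ => coneEnergy (antitoneNonnegCone n) (-z) :=
          (measurable_coneEnergy _).comp measurable_neg
        rw [lintegral_add_right _ hmeas, lintegral_coneEnergy_of_hasLaw hasLaw_comp_rev_stdGaussian,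
          lintegral_coneEnergy_of_hasLaw hasLaw_neg_stdGaussian, two_mul]

lemma mul_sum_range_le_sum_mul_of_antitone {d : ℕ → ℝ} (hd : ∀ k, 0 ≤ ∑ t ∈ Finset.range k, d t)
    {u : Fin n → ℝ} (hu : Antitone u) {c : ℝ} (hc : ∀ i, c ≤ u i) :
    c * ∑ t ∈ Finset.range n, d t ≤ ∑ i : Fin n, d i * u i := by
  induction n generalizing c with
  | zero => simp only [Finset.range_zero, Finset.sum_empty, mul_zero, Finset.univ_eq_empty, le_rfl]
  | succ n ih =>
    calc c * ∑ t ∈ Finset.range (n + 1), d t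
        ≤ u (Fin.last n) * ∑ t ∈ Finset.range (n + 1), d t :=
          mul_le_mul_of_nonneg_right (hc _) (hd _)
      _ = u (Fin.last n) * ∑ t ∈ Finset.range n, d t + d n * u (Fin.last n) := by
          rw [Finset.sum_range_succ]; ring
      _ ≤ ∑ i : Fin n, d i * u i.castSucc + d n * u (Fin.last n) :=
          add_le_add_left (ih (hu.comp_monotone Fin.strictMono_castSucc.monotone)
            fun i => hu (Fin.le_last i.castSucc)) _
      _ = ∑ i : Fin (n + 1), d i * u i := by
          rw [Fin.sum_univ_castSucc]; rfl

lemma coneEnergy_antitoneNonnegCone_le {z d : ℕ → ℝ}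
    (h : ∀ k, ∑ t ∈ Finset.range k, z t ≤ ∑ t ∈ Finset.range k, d t) :
    coneEnergy (antitoneNonnegCone n) (fun i => z i)
      ≤ ENNReal.ofReal (∑ t ∈ Finset.range n, d t ^ 2) := by
  refine iSup₂_le fun u hu => ENNReal.ofReal_le_ofReal ?_
  have habel : 0 ≤ ∑ i : Fin n, (d i - z i) * u i := by
    have := mul_sum_range_le_sum_mul_of_antitone (d := fun t => d t - z t) (c := 0)
      (fun k => by rw [Finset.sum_sub_distrib]; exact sub_nonneg.2 (h k)) hu.1 hu.2
    rwa [zero_mul] at this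
  have hzd : (fun i : Fin n => z i) ⬝ᵥ u ≤ (fun i : Fin n => d i) ⬝ᵥ u := by
    simpa only [sub_mul, Finset.sum_sub_distrib, sub_nonneg] using! habel
  rw [Finset.sum_range, ← dotProduct_self_eq_sum_sq fun i : Fin n => d i]
  linarith [two_mul_dotProduct_sub_le (fun i : Fin n => d i) u]

/-- The terms with `k / 2 ≤ t < k` alone suffice: there are at least `k / 2` of them, each at least
`2 * m k / k`. -/
lemma le_sum_range_two_mul_div {m : ℕ → ℝ} (hm : Monotone m) (h0 : m 0 = 0) (k : ℕ) :
    m k ≤ ∑ t ∈ Finset.range k, 2 * m (2 * (t + 1)) / (t + 1) := by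
  rcases k.eq_zero_or_pos with rfl | hk
  · simp only [h0, Finset.range_zero, Finset.sum_empty, le_rfl]
  have hnonneg (j : ℕ) : 0 ≤ m j := h0 ▸ hm j.zero_le
  have hk' : (0 : ℝ) < k := Nat.cast_pos.2 hk
  have hcard : (k : ℝ) ≤ 2 * (Finset.Ico (k / 2) k).card := by
    rw [Nat.card_Ico]
    exact_mod_cast (by omega : k ≤ 2 * (k - k / 2))
  calc m k = k * (m k / k) := (mul_div_cancel₀ _ hk'.ne').symm
    _ ≤ 2 * (Finset.Ico (k / 2) k).card * (m k / k) :=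
        mul_le_mul_of_nonneg_right hcard (div_nonneg (hnonneg k) hk'.le)
    _ = (Finset.Ico (k / 2) k).card • (2 * m k / k) := by rw [nsmul_eq_mul]; ring
    _ ≤ ∑ t ∈ Finset.Ico (k / 2) k, 2 * m (2 * (t + 1)) / (t + 1) := by
        refine Finset.card_nsmul_le_sum _ _ _ fun t ht => ?_
        obtain ⟨hkt, htk⟩ := Finset.mem_Ico.1 ht
        have hmono : m k ≤ m (2 * (t + 1)) := hm (by omega)
        have htk' : (t : ℝ) + 1 ≤ k := by exact_mod_cast htk
        have := hnonneg (2 * (t + 1))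
        gcongr
    _ ≤ ∑ t ∈ Finset.range k, 2 * m (2 * (t + 1)) / (t + 1) :=
        Finset.sum_le_sum_of_subset_of_nonneg
          (fun t ht => Finset.mem_range.2 (Finset.mem_Ico.1 ht).2)
          fun t _ _ => div_nonneg (mul_nonneg zero_le_two (hnonneg _)) (by positivity)

lemma coneEnergy_antitoneNonnegCone_le_partialSups (z : ℕ → ℝ) :
    coneEnergy (antitoneNonnegCone n) (fun i => z i) ≤ ENNReal.ofReal (∑ t ∈ Finset.range n,
      (2 * partialSups (fun j => ∑ i ∈ Finset.range j, z i) (2 * (t + 1)) / (t + 1)) ^ 2) := by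
  let s (j : ℕ) : ℝ := ∑ i ∈ Finset.range j, z i
  refine coneEnergy_antitoneNonnegCone_le
    (d := fun t : ℕ => 2 * partialSups s (2 * (t + 1)) / (t + 1)) fun k => ?_
  exact (le_partialSups s k).trans (le_sum_range_two_mul_div (partialSups s).monotone
    (by simp only [partialSups_zero, s, Finset.range_zero, Finset.sum_empty]) k)

lemma sum_integral_sq_le_harmonic {Ω : Type*} {_ : MeasurableSpace Ω} {P : Measure Ω}
    {M : ℕ → Ω → ℝ} (hM : ∀ k : ℕ, ∫ ω, M k ω ^ 2 ∂P ≤ 4 * k) (n : ℕ) :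
    ∑ t ∈ Finset.range n, ∫ ω, (2 * M (2 * (t + 1)) ω / (t + 1)) ^ 2 ∂P
      ≤ 32 * (harmonic n : ℝ) := by
  rw [harmonic, Rat.cast_sum, Finset.mul_sum]
  refine Finset.sum_le_sum fun t _ => ?_
  calc ∫ ω, (2 * M (2 * (t + 1)) ω / (t + 1)) ^ 2 ∂P
      = (2 / (t + 1)) ^ 2 * ∫ ω, M (2 * (t + 1)) ω ^ 2 ∂P := by
        simp only [mul_div_right_comm, mul_pow, integral_const_mul]
    _ ≤ (2 / (t + 1)) ^ 2 * (4 * (2 * (t + 1) : ℕ)) :=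
        mul_le_mul_of_nonneg_left (hM _) (by positivity)
    _ = 32 * (((t + 1 : ℕ)⁻¹ : ℚ) : ℝ) := by push_cast; field_simp; norm_num

lemma statDim_antitoneNonnegCone_le :
    statDim (antitoneNonnegCone n) ≤ ENNReal.ofReal (32 * (1 + Real.log n)) := by
  obtain ⟨Ω, _, P, Z, hZ, hlaw, hind, _⟩ := exists_iid ℕ (gaussianReal 0 1)
  let M (k : ℕ) (ω : Ω) : ℝ := partialSups (fun j => ∑ i ∈ Finset.range j, Z i ω) k
  have hLp (i) : MemLp (Z i) 2 P :=
    ((hlaw i).map_eq ▸ memLp_id_gaussianReal 2).comp_of_map (hZ i).aemeasurable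
  have hMLp (k) : MemLp (M k) 2 P :=
    memLp_partialSups_apply (fun j => memLp_finsetSum _ fun i _ => hLp i) k
  have hM (k : ℕ) : ∫ ω, M k ω ^ 2 ∂P ≤ 4 * k := by
    refine (integral_sq_partialSups_sum_le hZ hLp (fun i => ?_) hind k).trans_eq ?_
    · rw [(hlaw i).integral_eq, integral_id_gaussianReal]
    · simp only [(hlaw _).variance_eq, variance_id_gaussianReal, NNReal.coe_one,
        Finset.sum_const, Finset.card_range, nsmul_eq_mul, mul_one]
  have hvec : HasLaw (fun ω (i : Fin n) => Z i ω) (stdGaussian n) P :=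
    iIndepFun.hasLaw_pi (fun i => hlaw i) (hind.precomp Fin.val_injective)
  rw [← lintegral_coneEnergy_of_hasLaw hvec]
  have hintegrable (t : ℕ) : Integrable (fun ω => (2 * M (2 * (t + 1)) ω / (t + 1)) ^ 2) P := by
    simp only [mul_div_right_comm, mul_pow]
    exact (hMLp _).integrable_sq.const_mul _
  calc ∫⁻ ω, coneEnergy (antitoneNonnegCone n) (fun i => Z i ω) ∂P
      ≤ ∫⁻ ω, ENNReal.ofReal (∑ t ∈ Finset.range n, (2 * M (2 * (t + 1)) ω / (t + 1)) ^ 2) ∂P :=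
        lintegral_mono fun ω => coneEnergy_antitoneNonnegCone_le_partialSups fun i => Z i ω
    _ = ENNReal.ofReal (∑ t ∈ Finset.range n, ∫ ω, (2 * M (2 * (t + 1)) ω / (t + 1)) ^ 2 ∂P) := by
        rw [← integral_finsetSum _ fun t _ => hintegrable t, ofReal_integral_eq_lintegral_ofReal
          (integrable_finsetSum _ fun t _ => hintegrable t)
          (.of_forall fun ω => Finset.sum_nonneg fun t _ => sq_nonneg _)]
    _ ≤ ENNReal.ofReal (32 * harmonic n) :=
        ENNReal.ofReal_le_ofReal (sum_integral_sq_le_harmonic hM n)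
    _ ≤ ENNReal.ofReal (32 * (1 + Real.log n)) :=
        ENNReal.ofReal_le_ofReal (by linarith [harmonic_le_one_add_log n])

lemma statDim_monoCone_le_log :
    statDim (monoCone n) ≤ ENNReal.ofReal (64 * (1 + Real.log n)) := by
  calc statDim (monoCone n) ≤ 2 * ENNReal.ofReal (32 * (1 + Real.log n)) :=
        statDim_monoCone_le_two_mul.trans (mul_le_mul_right statDim_antitoneNonnegCone_le 2)
    _ = ENNReal.ofReal (64 * (1 + Real.log n)) := by
        rw [← ENNReal.ofReal_ofNat, ← ENNReal.ofReal_mul zero_le_two]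
        ring_nf

end LogBound

section IncreasePoints

variable {m n N : ℕ}

open Classical in
lemma incCount_eq_sum (x : Fin N → ℝ) :
    incCount N x = ∑ i : Fin N, ∑ j : Fin N,
      if (i : ℕ) + 1 = (j : ℕ) ∧ x i < x j then 1 else 0 := by
  rw [incCount, Nat.card_eq_fintype_card, Fintype.card_subtype, Finset.card_filter,
    Fintype.sum_prod_type]

lemma incCount_const (c : ℝ) : incCount N (fun _ => c) = 0 := by
  simp only [incCount_eq_sum, lt_irrefl, and_false, if_false, Finset.sum_const_zero]

lemma incCount_comp_strictMono (x : Fin N → ℝ) {φ : ℝ → ℝ} (hφ : StrictMono φ) :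
    incCount N (φ ∘ x) = incCount N x := by
  simp only [incCount, Function.comp_apply, hφ.lt_iff_lt]

open Classical in
lemma incCount_add (x : Fin (m + n) → ℝ) :
    incCount (m + n) x = incCount m (fun i => x (Fin.castAdd n i))
      + incCount n (fun j => x (Fin.natAdd m j))
      + ∑ i : Fin m, ∑ j : Fin n,
        if (i : ℕ) + 1 = m + (j : ℕ) ∧ x (Fin.castAdd n i) < x (Fin.natAdd m j)
          then 1 else 0 := by
  have hright : ∑ i : Fin n, ∑ j : Fin m, (if m + (i : ℕ) + 1 = (j : ℕ) ∧
      x (Fin.natAdd m i) < x (Fin.castAdd n j) then 1 else 0) = 0 :=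
    Finset.sum_eq_zero fun i _ => Finset.sum_eq_zero fun j _ => if_neg fun h => by omega
  simp only [incCount_eq_sum, Fin.sum_univ_add, Fin.val_castAdd, Fin.val_natAdd,
    Finset.sum_add_distrib, hright]
  simp only [add_assoc, Nat.add_left_cancel_iff, zero_add]
  omega

lemma incCount_add_le (x : Fin (m + n) → ℝ) :
    incCount (m + n) x ≤ incCount m (fun i => x (Fin.castAdd n i))
      + incCount n (fun j => x (Fin.natAdd m j)) + 1 := by
  classical
  rw [incCount_add]
  gcongr
  rw [← Fintype.sum_prod_type' (f := fun (i : Fin m) (j : Fin n) =>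
    if (i : ℕ) + 1 = m + (j : ℕ) ∧ x (Fin.castAdd n i) < x (Fin.natAdd m j) then 1 else 0),
    ← Finset.card_filter, Finset.card_le_one]
  rintro ⟨i, j⟩ h ⟨i', j'⟩ h'
  simp only [Finset.mem_filter, Finset.mem_univ, true_and] at h h'
  ext <;> simp only <;> omega

lemma incCount_add_ge (x : Fin (m + n) → ℝ) {i : Fin m} {j : Fin n}
    (hij : (i : ℕ) + 1 = m + (j : ℕ)) (hx : x (Fin.castAdd n i) < x (Fin.natAdd m j)) :
    incCount m (fun i => x (Fin.castAdd n i)) + incCount n (fun j => x (Fin.natAdd m j)) + 1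
      ≤ incCount (m + n) x := by
  classical
  rw [incCount_add]
  gcongr
  calc 1 = if (i : ℕ) + 1 = m + (j : ℕ) ∧ x (Fin.castAdd n i) < x (Fin.natAdd m j)
        then 1 else 0 := (if_pos ⟨hij, hx⟩).symm
    _ ≤ _ := Finset.single_le_sum (f := fun j : Fin n => if (i : ℕ) + 1 = m + (j : ℕ) ∧
        x (Fin.castAdd n i) < x (Fin.natAdd m j) then 1 else 0)
        (fun _ _ => Nat.zero_le _) (Finset.mem_univ j)
    _ ≤ _ := Finset.single_le_sum (f := fun i : Fin m => ∑ j : Fin n,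
        if (i : ℕ) + 1 = m + (j : ℕ) ∧ x (Fin.castAdd n i) < x (Fin.natAdd m j) then 1 else 0)
        (fun _ _ => Nat.zero_le _) (Finset.mem_univ i)

lemma exists_incCount_add_le {x : Fin N → ℝ} (hx : Monotone x) (hne : ¬ ∃ c, x = fun _ => c) :
    ∃ (m n : ℕ) (h : m + n = N), m < N ∧ n < N ∧
      incCount m (fun i => x (Fin.cast h (Fin.castAdd n i)))
        + incCount n (fun j => x (Fin.cast h (Fin.natAdd m j))) + 1 ≤ incCount N x := by
  obtain ⟨i, j, hij, hlt⟩ : ∃ i j : Fin N, (i : ℕ) + 1 = j ∧ x i < x j := by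
    obtain _ | N := N
    · exact absurd ⟨0, Subsingleton.elim _ _⟩ hne
    by_contra! h
    have hanti : Antitone x := Fin.antitone_iff_succ_le.2 fun k => h k.castSucc k.succ rfl
    exact hne ⟨x 0, funext fun i => le_antisymm (hanti i.zero_le) (hx i.zero_le)⟩
  obtain ⟨m, n, hmn, hm⟩ : ∃ m n, m + n = N ∧ m = i + 1 := ⟨i + 1, N - (i + 1), by omega, rfl⟩
  subst hmn
  refine ⟨m, n, rfl, by omega, by omega, ?_⟩
  exact incCount_add_ge x (i := ⟨i, by omega⟩) (j := ⟨0, by omega⟩) hm.symm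
    (hlt.trans_eq (congrArg x (Fin.ext (by simp only [Fin.val_natAdd]; omega))))

end IncreasePoints

section TangentConeSplitting

variable {m n N : ℕ}

lemma monoTangentCone_comp_of_injective (x : Fin N → ℝ) {φ : ℝ → ℝ} (hφ : φ.Injective) :
    monoTangentCone (φ ∘ x) = monoTangentCone x := by
  simp only [monoTangentCone, Function.comp_apply, hφ.eq_iff]

lemma statDim_monoTangentCone_add_le (x : Fin (m + n) → ℝ) :
    statDim (monoTangentCone x) ≤ statDim (monoTangentCone fun i => x (Fin.castAdd n i))
      + statDim (monoTangentCone fun j => x (Fin.natAdd m j)) :=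
  statDim_le_add (fun _ hv _ _ hij => hv _ _ ((Fin.strictMono_castAdd n).monotone hij))
    fun _ hv _ _ hij => hv _ _ ((Fin.strictMono_natAdd m).monotone hij)

lemma statDim_monoTangentCone_le_of_affine {a b : ℝ≥0∞}
    (h : ∀ ℓ : ℕ, statDim (monoCone ℓ) ≤ a + b * ℓ) {x : Fin N → ℝ} (hx : Monotone x) :
    statDim (monoTangentCone x) ≤ a * (incCount N x + 1) + b * N := by
  induction N using Nat.strong_induction_on with
  | h N ih =>
    by_cases hne : ∃ c, x = fun _ => c
    · obtain ⟨c, rfl⟩ := hne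
      rw [monoTangentCone_const, incCount_const, Nat.cast_zero, zero_add, mul_one]
      exact h N
    obtain ⟨m, n, rfl, hm, hn, hinc⟩ := exists_incCount_add_le hx hne
    set u : Fin m → ℝ := fun i => x (Fin.castAdd n i)
    set v : Fin n → ℝ := fun j => x (Fin.natAdd m j)
    have hu : Monotone u := hx.comp (Fin.strictMono_castAdd n).monotone
    have hv : Monotone v := hx.comp (Fin.strictMono_natAdd m).monotone
    have hinc' : (incCount m u : ℝ≥0∞) + incCount n v + 1 ≤ incCount (m + n) x := by
      exact_mod_cast hinc
    calc statDim (monoTangentCone x)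
        ≤ (a * (incCount m u + 1) + b * m) + (a * (incCount n v + 1) + b * n) :=
          (statDim_monoTangentCone_add_le x).trans (add_le_add (ih m hm hu) (ih n hn hv))
      _ = a * ((incCount m u + incCount n v + 1) + 1) + b * (m + n : ℕ) := by push_cast; ring
      _ ≤ a * (incCount (m + n) x + 1) + b * (m + n : ℕ) := by gcongr

lemma monotone_append {u : Fin m → ℝ} {v : Fin n → ℝ} (hu : Monotone u) (hv : Monotone v)
    (huv : ∀ i j, u i ≤ v j) : Monotone (Fin.append u v) := by
  intro k l hkl
  induction k using Fin.addCases <;> induction l using Fin.addCases <;>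
    simp only [Fin.append_left, Fin.append_right, Fin.le_def, Fin.val_castAdd, Fin.val_natAdd]
      at hkl ⊢
  · exact hu hkl
  · exact huv _ _
  · omega
  · exact hv (Nat.le_of_add_le_add_left hkl)

lemma statDim_add_le_statDim_monoTangentCone_append {u : Fin m → ℝ} {v : Fin n → ℝ}
    (huv : ∀ i j, u i < v j) :
    statDim (monoTangentCone u) + statDim (monoTangentCone v)
      ≤ statDim (monoTangentCone (Fin.append u v)) := by
  refine statDim_add_le (fun _ _ _ _ => le_rfl) (fun _ _ _ _ => le_rfl)
    fun y hy w hw k l hkl heq => ?_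
  induction k using Fin.addCases <;> induction l using Fin.addCases <;>
    simp only [Fin.append_left, Fin.append_right, Fin.le_def, Fin.val_castAdd, Fin.val_natAdd]
      at hkl heq ⊢
  · exact hy _ _ hkl heq
  · exact absurd heq (huv _ _).ne
  · omega
  · exact hw _ _ (Nat.le_of_add_le_add_left hkl) heq

lemma exists_monotone_append (u : Fin m → ℝ) (v : Fin n → ℝ) (hu : Monotone u) (hv : Monotone v) :
    ∃ x : Fin (m + n) → ℝ, Monotone x ∧ incCount (m + n) x ≤ incCount m u + incCount n v + 1 ∧
      statDim (monoTangentCone u) + statDim (monoTangentCone v) ≤ statDim (monoTangentCone x) := by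
  obtain ⟨c, hc⟩ : ∃ c, ∀ i j, u i < v j + c := by
    obtain ⟨c, hc⟩ := (Set.finite_range fun p : Fin m × Fin n => u p.1 - v p.2).bddAbove
    refine ⟨c + 1, fun i j => ?_⟩
    linarith [hc (Set.mem_range_self (i, j))]
  have hφ : StrictMono fun t : ℝ => t + c := add_left_strictMono
  refine ⟨Fin.append u ((fun t => t + c) ∘ v), monotone_append hu (hφ.monotone.comp hv)
    fun i j => (hc i j).le, ?_, ?_⟩
  · rw [← incCount_comp_strictMono v hφ]
    simpa only [Fin.append_left, Fin.append_right] using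
      incCount_add_le (Fin.append u ((fun t => t + c) ∘ v))
  · rw [← monoTangentCone_comp_of_injective v hφ.injective]
    exact statDim_add_le_statDim_monoTangentCone_append hc

lemma exists_monotone_statDim_sum_le (ls : List ℕ) (hN : ls.sum ≤ N) :
    ∃ x : Fin N → ℝ, Monotone x ∧ incCount N x ≤ ls.length ∧
      (ls.map fun ℓ => statDim (monoCone ℓ)).sum ≤ statDim (monoTangentCone x) := by
  induction ls generalizing N with
  | nil => exact ⟨fun _ => 0, monotone_const, (incCount_const 0).le, zero_le⟩
  | cons ℓ ls ih =>
    rw [List.sum_cons] at hN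
    obtain ⟨n, rfl⟩ := Nat.exists_eq_add_of_le (le_of_add_le_left hN)
    obtain ⟨v, hv, hinc, hdim⟩ := ih (Nat.le_of_add_le_add_left hN)
    obtain ⟨x, hx, hxinc, hxdim⟩ := exists_monotone_append (fun _ : Fin ℓ => 0) v monotone_const hv
    rw [incCount_const] at hxinc
    rw [monoTangentCone_const] at hxdim
    simp only [List.length_cons, List.map_cons, List.sum_cons]
    exact ⟨x, hx, by omega, le_trans (add_le_add_right hdim _) hxdim⟩

end TangentConeSplitting

section MeanSquaredError

variable {η : ∀ ℓ : ℕ, (Fin ℓ → ℝ) → Fin ℓ → ℝ} {N : ℕ} {ε : ℝ}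

lemma monoMSE_eq_iSup_lintegral_riskAt (hmeas : Measurable (η N)) :
    monoMSE η N ε = (N : ℝ≥0∞)⁻¹ * ⨆ ν ∈ monoClass N ε, ∫⁻ x, riskAt (η N) x ∂ν := by
  rw [monoMSE]
  congr! 5 with ν hν
  have := hν.1
  exact lintegral_prod _ (Measurable.aemeasurable (by fun_prop))

lemma lintegral_riskAt_le_of_affine {a b : ℝ≥0∞} (ha : a ≠ ∞)
    (h : ∀ ℓ : ℕ, statDim (monoCone ℓ) ≤ a + b * ℓ) (hη : IsMetricProj (monoCone N) (η N))
    {ν : Measure (Fin N → ℝ)} (hν : ν ∈ monoClass N ε) :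
    ∫⁻ x, riskAt (η N) x ∂ν ≤ a * (N * ENNReal.ofReal ε + 1) + b * N := by
  obtain ⟨_, hsupp, hcount⟩ := hν
  have hmono : ∀ᵐ x ∂ν, Monotone x := hsupp
  calc ∫⁻ x, riskAt (η N) x ∂ν
      ≤ ∫⁻ x, (a * (incCount N x + 1) + b * N) ∂ν := by
        refine lintegral_mono_ae (hmono.mono fun x hx => ?_)
        exact (riskAt_le_statDim_monoTangentCone hη hx).trans
          (statDim_monoTangentCone_le_of_affine h hx)
    _ = a * (∫⁻ x, (incCount N x : ℝ≥0∞) ∂ν + 1) + b * N := by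
        simp only [lintegral_add_right _ measurable_const, lintegral_const_mul' _ _ ha,
          lintegral_const, measure_univ, mul_one]
    _ ≤ a * (N * ENNReal.ofReal ε + 1) + b * N := by gcongr

lemma monoMSE_le_of_affine {a b : ℝ≥0∞} (ha : a ≠ ∞)
    (h : ∀ ℓ : ℕ, statDim (monoCone ℓ) ≤ a + b * ℓ) (hη : IsMetricProj (monoCone N) (η N))
    (hmeas : Measurable (η N)) (hN : N ≠ 0) :
    monoMSE η N ε ≤ a * ENNReal.ofReal ε + b + a * (N : ℝ≥0∞)⁻¹ :=
  calc monoMSE η N ε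
      ≤ (N : ℝ≥0∞)⁻¹ * (a * (N * ENNReal.ofReal ε + 1) + b * N) := by
        rw [monoMSE_eq_iSup_lintegral_riskAt hmeas]
        gcongr
        exact iSup₂_le fun ν hν => lintegral_riskAt_le_of_affine ha h hη hν
    _ = (N * (N : ℝ≥0∞)⁻¹) * (a * ENNReal.ofReal ε + b) + a * (N : ℝ≥0∞)⁻¹ := by ring
    _ = a * ENNReal.ofReal ε + b + a * (N : ℝ≥0∞)⁻¹ := by
        rw [ENNReal.mul_inv_cancel (by exact_mod_cast hN) (ENNReal.natCast_ne_top N), one_mul]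

lemma measurableSet_monoCone : MeasurableSet (monoCone N) := by
  simp only [monoCone, Monotone, Set.ofPred_forall]
  exact .iInter fun i => .iInter fun j => .iInter fun _ =>
    measurableSet_le (measurable_pi_apply i) (measurable_pi_apply j)

lemma dirac_mem_monoClass {x : Fin N → ℝ} (hx : Monotone x) (hinc : (incCount N x : ℝ) ≤ N * ε) :
    Measure.dirac x ∈ monoClass N ε := by
  refine ⟨inferInstance, ?_, ?_⟩
  · rw [Measure.dirac_apply' _ measurableSet_monoCone.compl]
    exact Set.indicator_of_notMem (not_not_intro hx) _
  · rw [lintegral_dirac, ← ENNReal.ofReal_natCast, ← ENNReal.ofReal_natCast,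
      ← ENNReal.ofReal_mul N.cast_nonneg]
    exact ENNReal.ofReal_le_ofReal hinc

lemma incCount_smul_le (x : Fin N → ℝ) {τ : ℝ} (hτ : 0 ≤ τ) :
    incCount N (τ • x) ≤ incCount N x := by
  obtain rfl | hτ := hτ.eq_or_lt
  · rw [zero_smul]
    exact (incCount_const 0).trans_le (Nat.zero_le _)
  · exact (incCount_comp_strictMono x (strictMono_mul_left_of_pos hτ)).le

lemma inv_mul_statDim_monoTangentCone_le_monoMSE (hη : IsMetricProj (monoCone N) (η N))
    (hmeas : Measurable (η N)) {x : Fin N → ℝ} (hx : Monotone x)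
    (hinc : (incCount N x : ℝ) ≤ N * ε) :
    (N : ℝ≥0∞)⁻¹ * statDim (monoTangentCone x) ≤ monoMSE η N ε := by
  rw [monoMSE_eq_iSup_lintegral_riskAt hmeas]
  gcongr
  refine statDim_monoTangentCone_le hη hmeas hx fun τ hτ => ?_
  have hmem : Measure.dirac (τ • x) ∈ monoClass N ε := by
    refine dirac_mem_monoClass (hx.const_mul hτ) (le_trans ?_ hinc)
    exact_mod_cast incCount_smul_le x hτ
  exact le_iSup₂_of_le _ hmem (lintegral_dirac _ _).ge

lemma inv_mul_sum_statDim_le_monoMSE (hη : IsMetricProj (monoCone N) (η N))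
    (hmeas : Measurable (η N)) {ls : List ℕ} (hsum : ls.sum ≤ N)
    (hlength : (ls.length : ℝ) ≤ N * ε) :
    (N : ℝ≥0∞)⁻¹ * (ls.map fun ℓ => statDim (monoCone ℓ)).sum ≤ monoMSE η N ε := by
  obtain ⟨x, hx, hinc, hdim⟩ := exists_monotone_statDim_sum_le ls hsum
  have hinc' : (incCount N x : ℝ) ≤ N * ε := le_trans (by exact_mod_cast hinc) hlength
  exact (mul_le_mul_right hdim _).trans
    (inv_mul_statDim_monoTangentCone_le_monoMSE hη hmeas hx hinc')

end MeanSquaredError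

/-- `p` lies on the least concave majorant of `r : ℕ → ℝ`: some line through `(p, r p)` majorizes
`r`. -/
def IsEnvelopeContact (r : ℕ → ℝ) (p : ℕ) : Prop :=
  ∃ b : ℝ, ∀ ℓ : ℕ, r ℓ ≤ r p + b * (ℓ - p)

section Envelope

variable {r : ℕ → ℝ}

lemma exists_forall_le_of_tendsto {u : ℕ → ℝ} {l : ℝ} (hu : Tendsto u atTop (nhds l))
    (h : ∃ n, l ≤ u n) : ∃ n₀, ∀ n, u n ≤ u n₀ := by
  by_contra! hmax
  obtain ⟨n, hn⟩ := h
  obtain ⟨n', hn'⟩ := hmax n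
  have htail : ∀ᶠ k in cocompact ℕ, u k ≤ u n' := by
    rw [cocompact_eq_cofinite, Nat.cofinite_eq_atTop]
    exact hu.eventually_le_const (hn.trans_lt hn')
  obtain ⟨n₀, hn₀⟩ := (continuous_of_discreteTopology (f := u)).exists_forall_ge' n' htail
  obtain ⟨k, hk⟩ := hmax n₀
  exact hk.not_ge (hn₀ k)

lemma tendsto_slope_of_isLittleO (hr : r =o[atTop] fun n => (n : ℝ)) (p : ℕ) :
    Tendsto (fun q : ℕ => (r q - r p) / (q - p)) atTop (nhds 0) := by
  have hconst : (fun _ : ℕ => r p) =o[atTop] fun n => (n : ℝ) :=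
    Asymptotics.isLittleO_const_left.2 (.inr (tendsto_norm_atTop_atTop.comp
      tendsto_natCast_atTop_atTop))
  have hden : (fun q : ℕ => (q : ℝ)) =O[atTop] fun q => (q : ℝ) - p := by
    refine .of_bound 2 ?_
    filter_upwards [eventually_ge_atTop (2 * p)] with q hq
    have hq' : 2 * (p : ℝ) ≤ q := by exact_mod_cast hq
    rw [Real.norm_eq_abs, Real.norm_eq_abs, Nat.abs_cast]
    linarith [le_abs_self ((q : ℝ) - p)]
  exact ((hr.sub hconst).trans_isBigO hden).tendsto_div_nhds_zero

lemma exists_max_slope (hr : r =o[atTop] fun n => (n : ℝ)) {p : ℕ} (hp : ∃ q, p < q ∧ r p ≤ r q) :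
    ∃ q, p < q ∧ r p ≤ r q ∧
      ∀ ℓ : ℕ, p < ℓ → r ℓ ≤ r p + (r q - r p) / (q - p) * (ℓ - p) := by
  obtain ⟨q₀, hq₀, hrq₀⟩ := hp
  have hpos {q : ℕ} (hq : p < q) : 0 < (q : ℝ) - p := sub_pos.2 (by exact_mod_cast hq)
  have hlim := (tendsto_add_atTop_iff_nat (p + 1)).2 (tendsto_slope_of_isLittleO hr p)
  have hslope₀ : 0 ≤ (r q₀ - r p) / (q₀ - p) := div_nonneg (sub_nonneg.2 hrq₀) (hpos hq₀).le
  obtain ⟨n, hn⟩ := exists_forall_le_of_tendsto hlim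
    ⟨q₀ - (p + 1), by simpa only [Nat.sub_add_cancel hq₀] using hslope₀⟩
  have hmax (ℓ : ℕ) (hℓ : p < ℓ) :
      (r ℓ - r p) / (ℓ - p) ≤ (r (n + (p + 1)) - r p) / ((n + (p + 1) : ℕ) - p) := by
    simpa only [Nat.sub_add_cancel hℓ] using hn (ℓ - (p + 1))
  refine ⟨n + (p + 1), by omega, ?_, fun ℓ hℓ => ?_⟩
  · linarith [(le_div_iff₀ (hpos (by omega))).1 (hslope₀.trans (hmax q₀ hq₀))]
  · linarith [(div_le_iff₀ (hpos hℓ)).1 (hmax ℓ hℓ)]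

/-- At a contact point `p`, the chord of greatest slope issuing to the right of `p` majorizes `r`
also to the left of `p`: any supporting line at `p` has at least that slope. -/
lemma IsEnvelopeContact.exists_next {p : ℕ} (hv : IsEnvelopeContact r p)
    (hr : r =o[atTop] fun n => (n : ℝ)) (hp : ∃ q, p < q ∧ r p ≤ r q) :
    ∃ (q : ℕ) (b : ℝ), p < q ∧ 0 ≤ b ∧ r q = r p + b * (q - p) ∧
      ∀ ℓ : ℕ, r ℓ ≤ r p + b * (ℓ - p) := by
  obtain ⟨q, hpq, hrpq, hmax⟩ := exists_max_slope hr hp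
  obtain ⟨b, hb⟩ := hv
  have hpos : 0 < (q : ℝ) - p := sub_pos.2 (by exact_mod_cast hpq)
  refine ⟨q, (r q - r p) / (q - p), hpq, div_nonneg (sub_nonneg.2 hrpq) hpos.le, ?_, fun ℓ => ?_⟩
  · rw [div_mul_cancel₀ _ hpos.ne']
    ring
  · obtain hℓ | hℓ := lt_or_ge p ℓ
    · exact hmax ℓ hℓ
    have hslope : (r q - r p) / (q - p) ≤ b := by
      rw [div_le_iff₀ hpos]
      linarith [hb q]
    have hℓ' : (ℓ : ℝ) - p ≤ 0 := sub_nonpos.2 (by exact_mod_cast hℓ)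
    linarith [hb ℓ, mul_le_mul_of_nonpos_right hslope hℓ']

lemma exists_affine_majorant_touching (hr : r =o[atTop] fun n => (n : ℝ))
    (hlinear : ∀ n : ℕ, r n ≤ n * r 1) (hdouble : ∀ n, r n ≤ r (n * 2)) {L : ℝ} (hL : 1 ≤ L) :
    ∃ (p q : ℕ) (a b : ℝ), 1 ≤ p ∧ (p : ℝ) ≤ L ∧ L < q ∧ 0 ≤ b ∧
      r p = a + b * p ∧ r q = a + b * q ∧ ∀ ℓ : ℕ, r ℓ ≤ a + b * ℓ := by
  have hone : IsEnvelopeContact r 1 := ⟨r 1, fun ℓ => by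
    rw [Nat.cast_one]
    linarith [hlinear ℓ]⟩
  let S : Set ℕ := {p | 1 ≤ p ∧ (p : ℝ) ≤ L ∧ IsEnvelopeContact r p}
  have hS : S.Finite := (Set.finite_Iic ⌊L⌋₊).subset fun p hp => Nat.le_floor hp.2.1
  obtain ⟨p, ⟨hp, hpL, hv⟩, hlargest⟩ :=
    Set.exists_max_image S id hS ⟨1, le_rfl, by rwa [Nat.cast_one], hone⟩
  obtain ⟨q, b, hpq, hb, hrq, hmaj⟩ := hv.exists_next hr ⟨p * 2, by omega, hdouble p⟩
  have hq : IsEnvelopeContact r q := ⟨b, fun ℓ => by linarith [hmaj ℓ]⟩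
  have hqL : L < q := by
    by_contra! hle
    exact hpq.not_ge (hlargest q ⟨by omega, hle, hq⟩)
  exact ⟨p, q, r p - b * p, b, hp, hpL, hqL, hb, by ring, by linarith,
    fun ℓ => by linarith [hmaj ℓ]⟩

end Envelope

/-- A law `π` of block lengths, with no mass at `0` and mean `1 / ε`: the constraint in the
variational problem `monoMinimaxVal`. -/
def IsBlockLaw (ε : ℝ) (π : ℕ → ℝ≥0∞) : Prop :=
  π 0 = 0 ∧ ∑' ℓ, π ℓ = 1 ∧ ∑' ℓ : ℕ, (ℓ : ℝ≥0∞) * π ℓ = ENNReal.ofReal (1 / ε)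

/-- The measure on `ℕ` with mass `α` at `p` and mass `β` at `q`, as a function of the point. -/
def twoPointLaw (p q : ℕ) (α β : ℝ≥0∞) : ℕ → ℝ≥0∞ :=
  Pi.single p α + Pi.single q β

section BlockLaws

variable {ε : ℝ} {π : ℕ → ℝ≥0∞}

lemma IsBlockLaw.ofReal_mul_tsum_affine (hπ : IsBlockLaw ε π) (hε : 0 < ε) (a b : ℝ≥0∞) :
    ENNReal.ofReal ε * ∑' ℓ : ℕ, π ℓ * (a + b * ℓ) = a * ENNReal.ofReal ε + b := by
  obtain ⟨-, hmass, hmean⟩ := hπ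
  have hsum : ∑' ℓ : ℕ, π ℓ * (a + b * ℓ) = a + b * ENNReal.ofReal (1 / ε) :=
    calc ∑' ℓ : ℕ, π ℓ * (a + b * ℓ) = ∑' ℓ : ℕ, (a * π ℓ + b * (ℓ * π ℓ)) :=
          tsum_congr fun ℓ => by ring
      _ = a + b * ENNReal.ofReal (1 / ε) := by
          rw [ENNReal.tsum_add, ENNReal.tsum_mul_left, ENNReal.tsum_mul_left, hmass, hmean, mul_one]
  have hcancel : ENNReal.ofReal ε * ENNReal.ofReal (1 / ε) = 1 := by
    rw [← ENNReal.ofReal_mul hε.le, mul_one_div_cancel hε.ne', ENNReal.ofReal_one]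
  rw [hsum, mul_add, mul_left_comm, hcancel, mul_one, mul_comm]

lemma monoMinimaxVal_le_of_affine {η : ∀ ℓ : ℕ, (Fin ℓ → ℝ) → Fin ℓ → ℝ} {a b : ℝ≥0∞}
    (hε : 0 < ε) (h : ∀ ℓ : ℕ, riskAtZero η ℓ ≤ a + b * ℓ) :
    monoMinimaxVal η ε ≤ a * ENNReal.ofReal ε + b := by
  refine iSup₂_le fun π hπ => ?_
  rw [← IsBlockLaw.ofReal_mul_tsum_affine hπ hε a b]
  gcongr
  exact h _

lemma tsum_twoPointLaw_mul (p q : ℕ) (α β : ℝ≥0∞) (f : ℕ → ℝ≥0∞) :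
    ∑' ℓ, twoPointLaw p q α β ℓ * f ℓ = α * f p + β * f q := by
  simp only [twoPointLaw, Pi.add_apply, add_mul, ENNReal.tsum_add, Pi.single_apply, ite_mul,
    zero_mul, tsum_ite_eq]

lemma isBlockLaw_twoPointLaw {p q : ℕ} (hp : p ≠ 0) (hq : q ≠ 0) {α β : ℝ≥0∞}
    (hmass : α + β = 1) (hmean : α * p + β * q = ENNReal.ofReal (1 / ε)) :
    IsBlockLaw ε (twoPointLaw p q α β) := by
  refine ⟨?_, ?_, ?_⟩
  · simp only [twoPointLaw, Pi.add_apply, Pi.single_eq_of_ne hp.symm, Pi.single_eq_of_ne hq.symm,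
      add_zero]
  · simpa only [mul_one, hmass] using tsum_twoPointLaw_mul p q α β fun _ => 1
  · simpa only [mul_comm, hmean] using tsum_twoPointLaw_mul p q α β fun ℓ => ℓ

end BlockLaws

section OptimalBlockLaw

lemma isLittleO_statDim_monoCone :
    (fun n => (statDim (monoCone n)).toReal) =o[atTop] fun n => (n : ℝ) := by
  have hbound : (fun n => (statDim (monoCone n)).toReal) =O[atTop]
      fun n : ℕ => 64 * (1 + Real.log n) := by
    refine .of_bound 1 (.of_forall fun n => ?_)
    have hlog : 0 ≤ 64 * (1 + Real.log n) := by
      have := Real.log_natCast_nonneg n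
      positivity
    rw [one_mul, Real.norm_of_nonneg ENNReal.toReal_nonneg, Real.norm_of_nonneg hlog]
    exact ENNReal.toReal_le_of_le_ofReal hlog statDim_monoCone_le_log
  have hone : (fun _ : ℝ => (1 : ℝ)) =o[atTop] (id : ℝ → ℝ) :=
    Asymptotics.isLittleO_const_id_atTop 1
  exact hbound.trans_isLittleO
    (((hone.add Real.isLittleO_log_id_atTop).const_mul_left 64).comp_tendsto
      tendsto_natCast_atTop_atTop)

lemma exists_statDim_affine_majorant {L : ℝ} (hL : 1 ≤ L) :
    ∃ (p q : ℕ) (a b : ℝ≥0), 1 ≤ p ∧ (p : ℝ) ≤ L ∧ L < q ∧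
      statDim (monoCone p) = a + b * p ∧ statDim (monoCone q) = a + b * q ∧
      ∀ ℓ : ℕ, statDim (monoCone ℓ) ≤ a + b * ℓ := by
  set r : ℕ → ℝ := fun n => (statDim (monoCone n)).toReal
  have hr (n : ℕ) : statDim (monoCone n) = ENNReal.ofReal (r n) :=
    (ENNReal.ofReal_toReal (ne_top_of_le_ne_top (natCast_ne_top n) (statDim_le _))).symm
  have hlinear (n : ℕ) : r n ≤ n * r 1 := by
    simp only [r, statDim_monoCone_one, ENNReal.toReal_one, mul_one]
    exact ENNReal.toReal_le_of_le_ofReal n.cast_nonneg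
      ((statDim_le _).trans_eq (ENNReal.ofReal_natCast n).symm)
  have hdouble (n : ℕ) : r n ≤ r (n * 2) := by
    refine ENNReal.toReal_mono ?_ (statDim_monoCone_le_mul two_ne_zero)
    exact (hr (n * 2)).trans_ne ENNReal.ofReal_ne_top
  obtain ⟨p, q, a, b, hp, hpL, hqL, hb, hrp, hrq, hmaj⟩ :=
    exists_affine_majorant_touching isLittleO_statDim_monoCone hlinear hdouble hL
  have ha : 0 ≤ a := ENNReal.toReal_nonneg.trans
    ((hmaj 0).trans_eq (by rw [Nat.cast_zero, mul_zero, add_zero]))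
  have hcast (ℓ : ℕ) : ENNReal.ofReal (a + b * ℓ)
      = (a.toNNReal : ℝ≥0∞) + (b.toNNReal : ℝ≥0∞) * ℓ := by
    rw [ENNReal.ofReal_add ha (by positivity), ENNReal.ofReal_mul hb, ENNReal.ofReal_natCast]
    rfl
  refine ⟨p, q, a.toNNReal, b.toNNReal, hp, hpL, hqL, ?_, ?_, fun ℓ => ?_⟩
  · exact (hr p).trans ((congrArg ENNReal.ofReal hrp).trans (hcast p))
  · exact (hr q).trans ((congrArg ENNReal.ofReal hrq).trans (hcast q))
  · rw [hr, ← hcast]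
    exact ENNReal.ofReal_le_ofReal (hmaj ℓ)

lemma exists_optimal_twoPointLaw {ε : ℝ} (hε : 0 < ε) (hε1 : ε ≤ 1) :
    ∃ (p q : ℕ) (α β a b : ℝ≥0), IsBlockLaw ε (twoPointLaw p q α β) ∧
      (∀ ℓ : ℕ, statDim (monoCone ℓ) ≤ a + b * ℓ) ∧
      ENNReal.ofReal ε * ∑' ℓ, twoPointLaw p q α β ℓ * statDim (monoCone ℓ)
        = a * ENNReal.ofReal ε + b := by
  obtain ⟨p, q, a, b, hp, hpL, hqL, hrp, hrq, hmaj⟩ :=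
    exists_statDim_affine_majorant ((one_le_div hε).2 hε1)
  obtain ⟨α, β, hα, hβ, hmass, hmean⟩ : 1 / ε ∈ segment ℝ (p : ℝ) q :=
    Icc_subset_segment ⟨hpL, hqL.le⟩
  lift α to ℝ≥0 using hα
  lift β to ℝ≥0 using hβ
  have hq : q ≠ 0 := by
    rintro rfl
    exact hqL.not_gt (by rw [Nat.cast_zero]; positivity)
  have hlaw : IsBlockLaw ε (twoPointLaw p q α β) := by
    refine isBlockLaw_twoPointLaw (by omega) hq (by exact_mod_cast hmass) ?_
    rw [← hmean, ENNReal.ofReal_eq_coe_nnreal (by positivity)]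
    norm_cast
  refine ⟨p, q, α, β, a, b, hlaw, hmaj, ?_⟩
  rw [← hlaw.ofReal_mul_tsum_affine hε, tsum_twoPointLaw_mul, tsum_twoPointLaw_mul, hrp, hrq]

end OptimalBlockLaw

section Limit

variable {η : ∀ ℓ : ℕ, (Fin ℓ → ℝ) → Fin ℓ → ℝ} {ε : ℝ}

lemma limsup_monoMSE_le_of_affine (hη : ∀ ℓ, IsMetricProj (monoCone ℓ) (η ℓ))
    (hmeas : ∀ ℓ, Measurable (η ℓ)) {a b : ℝ≥0∞} (ha : a ≠ ∞)
    (h : ∀ ℓ : ℕ, statDim (monoCone ℓ) ≤ a + b * ℓ) :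
    limsup (fun N : ℕ => monoMSE η N ε) atTop ≤ a * ENNReal.ofReal ε + b := by
  have hlim : Tendsto (fun N : ℕ => a * ENNReal.ofReal ε + b + a * (N : ℝ≥0∞)⁻¹) atTop
      (nhds (a * ENNReal.ofReal ε + b)) := by
    simpa only [mul_zero, add_zero] using (ENNReal.Tendsto.const_mul
      ENNReal.tendsto_inv_nat_nhds_zero (.inr ha)).const_add (a * ENNReal.ofReal ε + b)
  rw [← hlim.limsup_eq]
  refine limsup_le_limsup ?_
  filter_upwards [eventually_ne_atTop 0] with N hN
  exact monoMSE_le_of_affine ha h (hη N) (hmeas N) hN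

lemma tendsto_inv_mul_floor {c : ℝ} (hc : 0 ≤ c) :
    Tendsto (fun N : ℕ => (N : ℝ≥0∞)⁻¹ * (⌊c * N⌋₊ : ℝ≥0∞)) atTop (nhds (ENNReal.ofReal c)) := by
  have hlim := ENNReal.tendsto_ofReal ((tendsto_nat_floor_mul_div_atTop hc).comp
    (tendsto_natCast_atTop_atTop (R := ℝ)))
  refine hlim.congr' ?_
  filter_upwards [eventually_gt_atTop 0] with N hN
  rw [Function.comp_apply, ENNReal.ofReal_div_of_pos (by exact_mod_cast hN), ENNReal.ofReal_natCast,
    ENNReal.ofReal_natCast, ENNReal.div_eq_inv_mul]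

lemma floor_add_floor_le_monoMSE {N p q : ℕ} (hη : IsMetricProj (monoCone N) (η N))
    (hmeas : Measurable (η N)) (hε : 0 < ε) {α β : ℝ≥0} (hmass : α + β = 1)
    (hmean : (α * p + β * q : ℝ) = 1 / ε) :
    (N : ℝ≥0∞)⁻¹ * (⌊ε * α * N⌋₊ * statDim (monoCone p) + ⌊ε * β * N⌋₊ * statDim (monoCone q))
      ≤ monoMSE η N ε := by
  set m := ⌊ε * α * N⌋₊
  set n := ⌊ε * β * N⌋₊
  have hm : (m : ℝ) ≤ ε * α * N := Nat.floor_le (by positivity)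
  have hn : (n : ℝ) ≤ ε * β * N := Nat.floor_le (by positivity)
  have hsum : ((m * p + n * q : ℕ) : ℝ) ≤ N := by
    push_cast
    calc (m : ℝ) * p + n * q ≤ ε * α * N * p + ε * β * N * q := by gcongr
      _ = ε * N * (α * p + β * q) := by ring
      _ = N := by rw [hmean]; field_simp
  have hlength : ((m + n : ℕ) : ℝ) ≤ N * ε := by
    push_cast
    calc (m : ℝ) + n ≤ ε * α * N + ε * β * N := add_le_add hm hn
      _ = N * ε * (α + β : ℝ≥0) := by push_cast; ring
      _ = N * ε := by rw [hmass, NNReal.coe_one, mul_one]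
  have h := inv_mul_sum_statDim_le_monoMSE hη hmeas
    (ls := List.replicate m p ++ List.replicate n q) (ε := ε)
  simp only [List.map_append, List.map_replicate, List.sum_append, List.sum_replicate,
    List.length_append, List.length_replicate, smul_eq_mul, nsmul_eq_mul] at h
  exact h (by exact_mod_cast hsum) hlength

lemma le_liminf_monoMSE_of_isBlockLaw (hη : ∀ ℓ, IsMetricProj (monoCone ℓ) (η ℓ))
    (hmeas : ∀ ℓ, Measurable (η ℓ)) (hε : 0 < ε) {p q : ℕ} {α β : ℝ≥0}
    (hlaw : IsBlockLaw ε (twoPointLaw p q α β)) :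
    ENNReal.ofReal ε * ∑' ℓ, twoPointLaw p q α β ℓ * statDim (monoCone ℓ)
      ≤ liminf (fun N : ℕ => monoMSE η N ε) atTop := by
  obtain ⟨-, hmass, hmean⟩ := hlaw
  have hmass' : α + β = 1 := by
    have := tsum_twoPointLaw_mul p q α β fun _ => 1
    simp only [mul_one, hmass] at this
    exact_mod_cast this.symm
  have hmean' : (α * p + β * q : ℝ) = 1 / ε := by
    have h : (α * p + β * q : ℝ≥0∞) = ENNReal.ofReal (1 / ε) := by
      rw [← tsum_twoPointLaw_mul p q α β fun ℓ => ℓ, ← hmean]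
      exact tsum_congr fun ℓ => mul_comm _ _
    refine (ENNReal.ofReal_eq_ofReal_iff (by positivity) (by positivity)).1 ?_
    rw [← h, ENNReal.ofReal_eq_coe_nnreal (by positivity)]
    norm_cast
  have hlim : Tendsto (fun N : ℕ => (N : ℝ≥0∞)⁻¹ * (⌊ε * α * N⌋₊ * statDim (monoCone p)
      + ⌊ε * β * N⌋₊ * statDim (monoCone q))) atTop
      (nhds (ENNReal.ofReal ε * ∑' ℓ, twoPointLaw p q α β ℓ * statDim (monoCone ℓ))) := by
    have hterm (c : ℝ≥0) (n : ℕ) := ENNReal.Tendsto.mul_const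
      (tendsto_inv_mul_floor (c := ε * c) (by positivity))
      (.inr (ne_top_of_le_ne_top (natCast_ne_top n) (statDim_le (monoCone n))))
    convert (hterm α p).add (hterm β q) using 2 with N
    · ring
    · simp only [tsum_twoPointLaw_mul, ENNReal.ofReal_mul hε.le, ENNReal.ofReal_coe_nnreal]
      ring
  rw [← hlim.liminf_eq]
  exact liminf_le_liminf (.of_forall fun N =>
    floor_add_floor_le_monoMSE (hη N) (hmeas N) hε hmass' hmean')

end Limit

section SmallSparsity

variable {ε : ℝ}

lemma statDim_monoCone_le_log_one_div (hε : 0 < ε) (hε1 : ε ≤ 1) (ℓ : ℕ) :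
    statDim (monoCone ℓ)
      ≤ ENNReal.ofReal (64 * Real.log (1 / ε)) + ENNReal.ofReal (64 * ε) * ℓ := by
  obtain rfl | hℓ := Nat.eq_zero_or_pos ℓ
  · exact (statDim_le _).trans (by rw [Nat.cast_zero]; exact zero_le)
  have hℓ' : (0 : ℝ) < ℓ := by exact_mod_cast hℓ
  have hlog : 0 ≤ Real.log (1 / ε) := Real.log_nonneg ((one_le_div hε).2 hε1)
  have hsplit : 1 + Real.log ℓ ≤ Real.log (1 / ε) + ε * ℓ := by
    have := Real.log_le_sub_one_of_pos (mul_pos hε hℓ')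
    rw [Real.log_mul hε.ne' hℓ'.ne'] at this
    rw [one_div, Real.log_inv]
    linarith
  rw [← ENNReal.ofReal_natCast, ← ENNReal.ofReal_mul (by positivity),
    ← ENNReal.ofReal_add (by positivity) (by positivity)]
  exact statDim_monoCone_le_log.trans (ENNReal.ofReal_le_ofReal (by linarith))

lemma monoMinimaxVal_le_sq_log {η : ∀ ℓ : ℕ, (Fin ℓ → ℝ) → Fin ℓ → ℝ}
    (hη : ∀ ℓ, IsMetricProj (monoCone ℓ) (η ℓ)) (hmeas : ∀ ℓ, Measurable (η ℓ))
    (hε : 0 < ε) (hsmall : ε ≤ Real.exp (-5)) :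
    monoMinimaxVal η ε ≤ ENNReal.ofReal (20 * ε * Real.log (1 / ε) ^ 2) := by
  have hε1 : ε ≤ 1 := hsmall.trans (Real.exp_le_one_iff.2 (by norm_num))
  have hlog : 5 ≤ Real.log (1 / ε) := by
    rw [one_div, Real.log_inv]
    linarith [(Real.log_le_iff_le_exp hε).2 hsmall]
  have hrisk (ℓ : ℕ) : riskAtZero η ℓ
      ≤ ENNReal.ofReal (64 * Real.log (1 / ε)) + ENNReal.ofReal (64 * ε) * ℓ :=
    (riskAtZero_eq_statDim (hη ℓ) (hmeas ℓ)).trans_le (statDim_monoCone_le_log_one_div hε hε1 ℓ)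
  calc monoMinimaxVal η ε
      ≤ ENNReal.ofReal (64 * Real.log (1 / ε)) * ENNReal.ofReal ε + ENNReal.ofReal (64 * ε) :=
        monoMinimaxVal_le_of_affine hε hrisk
    _ = ENNReal.ofReal (ε * (64 * Real.log (1 / ε) + 64)) := by
        rw [← ENNReal.ofReal_mul (by positivity),
          ← ENNReal.ofReal_add (by positivity) (by positivity)]
        ring_nf
    _ ≤ ENNReal.ofReal (20 * ε * Real.log (1 / ε) ^ 2) := by
        rw [mul_comm 20 ε, mul_assoc ε]
        gcongr
        nlinarith

end SmallSparsity

/-- **Asymptotic minimax MSE of monotone regression.**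
With `η ℓ` the Euclidean projection onto the monotone cone in each dimension:
(i) for every `ε ∈ (0,1)` the limit `M(ε|MonoReg) = lim_N M(F_{N,ε,mono})`
exists and equals `max{ ε Σ_ℓ π_ℓ r(ℓ) : Σ_ℓ ℓ π_ℓ = 1/ε }`, the maximum
being attained; (ii) there exists `ε₀ > 0` such that for all `ε ∈ (0,ε₀]`,
`M(ε|MonoReg) ≤ 20 ε (log(1/ε))²`. -/
theorem monoReg_minimax
    (η : ∀ ℓ : ℕ, (Fin ℓ → ℝ) → (Fin ℓ → ℝ))
    (hmeas : ∀ ℓ, Measurable (η ℓ))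
    (hproj : ∀ (ℓ : ℕ) (y : Fin ℓ → ℝ), η ℓ y ∈ monoCone ℓ ∧
      ∀ x ∈ monoCone ℓ, (∑ i, (y i - η ℓ y i) ^ 2) ≤ ∑ i, (y i - x i) ^ 2) :
    (∀ ε : ℝ, 0 < ε → ε < 1 →
      Tendsto (fun N : ℕ => monoMSE η N ε) atTop (nhds (monoMinimaxVal η ε)) ∧
      ∃ π : ℕ → ℝ≥0∞,
        (π 0 = 0 ∧ (∑' ℓ, π ℓ) = 1 ∧
          (∑' ℓ : ℕ, (ℓ : ℝ≥0∞) * π ℓ) = ENNReal.ofReal (1 / ε)) ∧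
        monoMinimaxVal η ε = ENNReal.ofReal ε * ∑' ℓ, π ℓ * riskAtZero η ℓ) ∧
    (∃ ε₀ : ℝ, 0 < ε₀ ∧ ∀ ε : ℝ, 0 < ε → ε ≤ ε₀ →
      monoMinimaxVal η ε ≤ ENNReal.ofReal (20 * ε * Real.log (1 / ε) ^ 2)) := by
  have hrisk (ℓ : ℕ) : riskAtZero η ℓ = statDim (monoCone ℓ) :=
    riskAtZero_eq_statDim (hproj ℓ) (hmeas ℓ)
  refine ⟨fun ε hε hε1 => ?_, Real.exp (-5), Real.exp_pos _,
    fun ε hε hsmall => monoMinimaxVal_le_sq_log hproj hmeas hε hsmall⟩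
  obtain ⟨p, q, α, β, a, b, hlaw, hmaj, hopt⟩ := exists_optimal_twoPointLaw hε hε1.le
  simp only [← hrisk] at hopt
  have hval : monoMinimaxVal η ε
      = ENNReal.ofReal ε * ∑' ℓ, twoPointLaw p q α β ℓ * riskAtZero η ℓ := by
    refine le_antisymm ?_ (le_iSup₂_of_le _ hlaw le_rfl)
    rw [hopt]
    exact monoMinimaxVal_le_of_affine hε fun ℓ => (hrisk ℓ).trans_le (hmaj ℓ)
  refine ⟨tendsto_of_le_liminf_of_limsup_le ?_ ?_, _, hlaw, hval⟩
  · simp only [hval, hrisk]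
    exact le_liminf_monoMSE_of_isBlockLaw hproj hmeas hε hlaw
  · rw [hval, hopt]
    exact limsup_monoMSE_le_of_affine hproj hmeas ENNReal.coe_ne_top hmaj
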